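/- arXiv:1508.04227 — 2 statements merged into one kernel-verified Lean document; each statement's English description precedes it below -/
import Mathlib

section
/- There is an n0 depending only on |𝒳|,|𝒴|,|𝒲| such that for all n ≥ n0, every joint type P_{X̄Ȳ} ∈ 𝒫_n(𝒳×𝒴), and every r1,r2 > 0, there exist a conditional type P_{W̄|X̄Ȳ} ∈ 𝒫_n(𝒲|𝒳×𝒴) satisfying n H(X̄|W̄) ≤ n r1 + 2|𝒳||𝒴||𝒲| log n and n H(Ȳ|W̄) ≤ n r2 + 2|𝒳||𝒴||𝒲| log n, and a subset 𝒞_n ⊆ 𝒯ⁿ_{W̄} with log|𝒞_n| ≤ n R(r1,r2|P_{X̄Ȳ}) + (3|𝒳||𝒴||𝒲|+4) log(n+1), such that for every (x⃗,y⃗) ∈ 𝒯ⁿ_{X̄Ȳ} there exists w⃗ ∈ 𝒞_n with (w⃗,x⃗,y⃗) ∈ 𝒯ⁿ_{W̄X̄Ȳ}. -/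
/-!
The proof is the method of types, with explicit constants.

*Counting.* For letter counts `k` with sum `n`, every type class satisfies
`(n+1)^(-|α|) 2^(n H) ≤ |T(k)| ≤ 2^(n H)` with `H` the entropy of `k / n`
(`le_logb_card_tclass`, `logb_card_tclass_le`): expand `n ^ n = (∑ a, k a) ^ n` as a sum over words
and group the words by type. The upper bound keeps one group; the lower bound holds because there
are at most `(n+1)^|α|` groups and the one of `k` itself is the largest, by the multinomial formula
for `|T(k)|` and `k! k^j ≤ j! k^k`.

*Covering.* By permutation symmetry each word of the `XY` type class is compatible with the same
fraction `q = |T_WXY| / (|T_XY| |T_W|)` of `T_W`, so greedy selection covers `T_XY` with at most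
`(ln |T_XY| + 1) / q` words of `T_W` (`greedy_cover`, `type_cover`), whose logarithm is at most
`n I(W ∧ XY) + (|𝒲||𝒳||𝒴| + 2) log (n+1)`.

*Rounding.* Take a test channel whose mutual information is within `log (n+1) / n` of
`R(r1, r2 | P)`, and round its joint distribution with `P` to multiples of `1 / n` keeping the
`XY`-marginal (`exists_rounding`). Atoms of the joint distribution move by at most `1 / n`, so `n`
times the entropy of the joint law or of any of the marginals on `W`, `(W, X)`, `(W, Y)` moves by at
most `|𝒳||𝒴||𝒲| log n` (`abs_ent_sub_le`); each information quantity involves two such entropies,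
whence the factors `2` and `2 + 1` in front of `|𝒳||𝒴||𝒲|` in the bounds.
-/

open Finset Filter MeasureTheory

attribute [local instance] Classical.propDecidable

namespace GW

noncomputable section

/-- Shannon entropy (base 2) of a distribution on a finite alphabet,
with the convention `0 * log 0 = 0`. -/
def ent {α : Type*} [Fintype α] (p : α → ℝ) : ℝ := -∑ a, p a * Real.logb 2 (p a)

/-- `p` is a probability distribution on a finite alphabet. -/
def IsProb {α : Type*} [Fintype α] (p : α → ℝ) : Prop :=
  (∀ a, 0 ≤ p a) ∧ ∑ a, p a = 1

/-- `K` is a channel (a conditional probability distribution). -/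
def IsChannel {α β : Type*} [Fintype α] [Fintype β] (K : α → β → ℝ) : Prop :=
  ∀ a, IsProb (K a)

variable {𝒳 𝒴 𝒲 : Type*} [Fintype 𝒳] [Fintype 𝒴] [Fintype 𝒲]

/-- Output distribution `P_W` on `𝒲` induced by the source `p` on `𝒳 × 𝒴`
and the test channel `K`. -/
def outW (p : 𝒳 × 𝒴 → ℝ) (K : 𝒳 × 𝒴 → 𝒲 → ℝ) (w : 𝒲) : ℝ := ∑ a, p a * K a w

/-- Joint distribution of `(W, X, Y)`. -/
def jointW (p : 𝒳 × 𝒴 → ℝ) (K : 𝒳 × 𝒴 → 𝒲 → ℝ) : 𝒲 × 𝒳 × 𝒴 → ℝ :=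
  fun z => p z.2 * K z.2 z.1

/-- Joint distribution of `(W, X)`. -/
def margWX (p : 𝒳 × 𝒴 → ℝ) (K : 𝒳 × 𝒴 → 𝒲 → ℝ) : 𝒲 × 𝒳 → ℝ :=
  fun z => ∑ y, p (z.2, y) * K (z.2, y) z.1

/-- Joint distribution of `(W, Y)`. -/
def margWY (p : 𝒳 × 𝒴 → ℝ) (K : 𝒳 × 𝒴 → 𝒲 → ℝ) : 𝒲 × 𝒴 → ℝ :=
  fun z => ∑ x, p (x, z.2) * K (x, z.2) z.1

/-- Mutual information `I(W ∧ X,Y)` (base 2). -/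
def mutInfoW (p : 𝒳 × 𝒴 → ℝ) (K : 𝒳 × 𝒴 → 𝒲 → ℝ) : ℝ :=
  ent (outW p K) + ent p - ent (jointW p K)

/-- Conditional entropy `H(X|W)`. -/
def condEntX (p : 𝒳 × 𝒴 → ℝ) (K : 𝒳 × 𝒴 → 𝒲 → ℝ) : ℝ :=
  ent (margWX p K) - ent (outW p K)

/-- Conditional entropy `H(Y|W)`. -/
def condEntY (p : 𝒳 × 𝒴 → ℝ) (K : 𝒳 × 𝒴 → 𝒲 → ℝ) : ℝ :=
  ent (margWY p K) - ent (outW p K)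

/-- Conditional distribution `P_{X|W}` induced by `p` and `K`. -/
def condXW (p : 𝒳 × 𝒴 → ℝ) (K : 𝒳 × 𝒴 → 𝒲 → ℝ) (w : 𝒲) (x : 𝒳) : ℝ :=
  margWX p K (w, x) / outW p K w

/-- Conditional distribution `P_{Y|W}` induced by `p` and `K`. -/
def condYW (p : 𝒳 × 𝒴 → ℝ) (K : 𝒳 × 𝒴 → 𝒲 → ℝ) (w : 𝒲) (y : 𝒴) : ℝ :=
  margWY p K (w, y) / outW p K w

/-- The Gray–Wyner first-order rate function
`R(r1,r2|P) = min { I(W ∧ X,Y) : |𝒲| ≤ |𝒳||𝒴|+2, H(X|W) ≤ r1, H(Y|W) ≤ r2 }`. -/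
def Rgw (p : 𝒳 × 𝒴 → ℝ) (r1 r2 : ℝ) : ℝ :=
  sInf { ρ : ℝ | ∃ k, k ≤ Fintype.card 𝒳 * Fintype.card 𝒴 + 2 ∧
    ∃ K : 𝒳 × 𝒴 → Fin k → ℝ, IsChannel K ∧
      condEntX p K ≤ r1 ∧ condEntY p K ≤ r2 ∧ ρ = mutInfoW p K }

/-- `K` is an optimal test channel achieving `R(r1,r2|p)`. -/
def IsOptChannel (p : 𝒳 × 𝒴 → ℝ) (r1 r2 : ℝ) {k : ℕ} (K : 𝒳 × 𝒴 → Fin k → ℝ) : Prop :=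
  k ≤ Fintype.card 𝒳 * Fintype.card 𝒴 + 2 ∧ IsChannel K ∧
    condEntX p K ≤ r1 ∧ condEntY p K ≤ r2 ∧ mutInfoW p K = Rgw p r1 r2

/-- The function `Λ(x,y|Q_W̄, Q_{X̂|Ŵ}, Q_{Ŷ|Ŵ}, λ1, λ2)`;
terms with a vanishing conditional probability are taken to be `0`. -/
def Lam (r1 r2 lam1 lam2 : ℝ) (QW : 𝒲 → ℝ) (QX : 𝒲 → 𝒳 → ℝ) (QY : 𝒲 → 𝒴 → ℝ)
    (x : 𝒳) (y : 𝒴) : ℝ :=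
  - Real.logb 2 (∑ w, QW w *
      (if QX w x = 0 ∨ QY w y = 0 then 0 else
        (2 : ℝ) ^ (lam1 * (r1 + Real.logb 2 (QX w x)) + lam2 * (r2 + Real.logb 2 (QY w y)))))

/-- The function
`F(P_{W|XY},P_W̄,P_{X̂|Ŵ},P_{Ŷ|Ŵ}) = D(P_{W|XY}‖P_W̄|P_XY) + λ1 E[log 1/P_{X̂|Ŵ}(X|W) - r1] + λ2 E[log 1/P_{Ŷ|Ŵ}(Y|W) - r2]`. -/
def Ffun (p : 𝒳 × 𝒴 → ℝ) (r1 r2 lam1 lam2 : ℝ) (K : 𝒳 × 𝒴 → 𝒲 → ℝ)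
    (QW : 𝒲 → ℝ) (QX : 𝒲 → 𝒳 → ℝ) (QY : 𝒲 → 𝒴 → ℝ) : ℝ :=
  (∑ a : 𝒳 × 𝒴, ∑ w, p a * K a w * Real.logb 2 (K a w / QW w))
    + lam1 * (∑ a : 𝒳 × 𝒴, ∑ w, p a * K a w * (-Real.logb 2 (QX w a.1) - r1))
    + lam2 * (∑ a : 𝒳 × 𝒴, ∑ w, p a * K a w * (-Real.logb 2 (QY w a.2) - r2))

/-- The tilted information density for the Gray–Wyner network, built from an
(optimal) test channel `K` via its induced output and conditional distributions. -/
def tiltedInfo (p : 𝒳 × 𝒴 → ℝ) (r1 r2 lam1 lam2 : ℝ) {k : ℕ}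
    (K : 𝒳 × 𝒴 → Fin k → ℝ) (x : 𝒳) (y : 𝒴) : ℝ :=
  Lam r1 r2 lam1 lam2 (outW p K) (condXW p K) (condYW p K) x y

/-- The explicit optimizing channel of Lemma 1. -/
def Kstar (r1 r2 lam1 lam2 : ℝ) (QW : 𝒲 → ℝ) (QX : 𝒲 → 𝒳 → ℝ) (QY : 𝒲 → 𝒴 → ℝ) :
    𝒳 × 𝒴 → 𝒲 → ℝ :=
  fun a w => if QX w a.1 = 0 ∨ QY w a.2 = 0 then 0 else
    QW w * (2 : ℝ) ^ (Lam r1 r2 lam1 lam2 QW QX QY a.1 a.2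
      + lam1 * (r1 + Real.logb 2 (QX w a.1)) + lam2 * (r2 + Real.logb 2 (QY w a.2)))

/-- A Gray–Wyner code of blocklength `n` with message sets of sizes `M0`, `M1`, `M2`. -/
structure GWCode (𝒳 𝒴 : Type*) (n M0 M1 M2 : ℕ) where
  enc0 : (Fin n → 𝒳 × 𝒴) → Fin M0
  enc1 : (Fin n → 𝒳 × 𝒴) → Fin M1
  enc2 : (Fin n → 𝒳 × 𝒴) → Fin M2
  dec1 : Fin M0 × Fin M1 → Fin n → 𝒳
  dec2 : Fin M0 × Fin M2 → Fin n → 𝒴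

/-- Correct decoding of the source word `f`. -/
def GWCode.correct {𝒳 𝒴 : Type*} {n M0 M1 M2 : ℕ} (C : GWCode 𝒳 𝒴 n M0 M1 M2)
    (f : Fin n → 𝒳 × 𝒴) : Prop :=
  ∀ i, C.dec1 (C.enc0 f, C.enc1 f) i = (f i).1 ∧ C.dec2 (C.enc0 f, C.enc2 f) i = (f i).2

/-- Error probability of a code under the source distribution `P` on words. -/
def PeGW {n M0 M1 M2 : ℕ} (C : GWCode 𝒳 𝒴 n M0 M1 M2) (P : (Fin n → 𝒳 × 𝒴) → ℝ) : ℝ :=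
  ∑ f ∈ Finset.univ.filter (fun f => ¬ C.correct f), P f

/-- Correct probability of a code. -/
def PcGW {n M0 M1 M2 : ℕ} (C : GWCode 𝒳 𝒴 n M0 M1 M2) (P : (Fin n → 𝒳 × 𝒴) → ℝ) : ℝ :=
  1 - PeGW C P

/-- The i.i.d. (product) distribution on length-`n` source words. -/
def prodDist (p : 𝒳 × 𝒴 → ℝ) (n : ℕ) : (Fin n → 𝒳 × 𝒴) → ℝ := fun f => ∏ i, p (f i)

/-- First-order achievability of a rate triple for the Gray–Wyner network. -/
def GWAchievable (p : 𝒳 × 𝒴 → ℝ) (r0 r1 r2 : ℝ) : Prop :=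
  ∃ (M0 M1 M2 : ℕ → ℕ) (C : (n : ℕ) → GWCode 𝒳 𝒴 n (M0 n) (M1 n) (M2 n)),
    limsup (fun n : ℕ => Real.logb 2 (M0 n) / n) atTop ≤ r0 ∧
    limsup (fun n : ℕ => Real.logb 2 (M1 n) / n) atTop ≤ r1 ∧
    limsup (fun n : ℕ => Real.logb 2 (M2 n) / n) atTop ≤ r2 ∧
    Tendsto (fun n : ℕ => PeGW (C n) (prodDist p n)) atTop (nhds 0)

/-- Second-order `(ε, r0*, r1*, r2*)`-achievability of `(L0, L1, L2)`. -/
def GWSecondAchievable (p : 𝒳 × 𝒴 → ℝ) (ε r0 r1 r2 L0 L1 L2 : ℝ) : Prop :=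
  ∃ (M0 M1 M2 : ℕ → ℕ) (C : (n : ℕ) → GWCode 𝒳 𝒴 n (M0 n) (M1 n) (M2 n)),
    limsup (fun n : ℕ => (Real.logb 2 (M0 n) - n * r0) / Real.sqrt n) atTop ≤ L0 ∧
    limsup (fun n : ℕ => (Real.logb 2 (M1 n) - n * r1) / Real.sqrt n) atTop ≤ L1 ∧
    limsup (fun n : ℕ => (Real.logb 2 (M2 n) - n * r2) / Real.sqrt n) atTop ≤ L2 ∧
    limsup (fun n : ℕ => PeGW (C n) (prodDist p n)) atTop ≤ ε

/-- Empirical distribution (type) of a sequence. -/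
def empDist {α : Type*} [Fintype α] {n : ℕ} (f : Fin n → α) (a : α) : ℝ :=
  ((Finset.univ.filter fun i => f i = a).card : ℝ) / n

/-- `p` is a type of length-`n` sequences. -/
def IsJointType {α : Type*} [Fintype α] (n : ℕ) (p : α → ℝ) : Prop :=
  ∃ f : Fin n → α, ∀ a, p a = empDist f a

/-- `V` is a conditional type (of length `n`) given the joint type `p`. -/
def IsCondType (n : ℕ) (p : 𝒳 × 𝒴 → ℝ) (V : 𝒳 × 𝒴 → 𝒲 → ℝ) : Prop :=
  IsChannel V ∧ ∀ a, 0 < p a → ∀ w, ∃ c : ℕ, V a w = c / (n * p a)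

/-- The uniform distribution on the type class of the joint type `p`. -/
def unifType (n : ℕ) (p : 𝒳 × 𝒴 → ℝ) : (Fin n → 𝒳 × 𝒴) → ℝ :=
  fun f => if ∀ a, empDist f a = p a then
    (1 : ℝ) / ((Finset.univ.filter fun g : Fin n → 𝒳 × 𝒴 => ∀ a, empDist g a = p a).card : ℝ)
  else 0

/-- The single-letter Gray–Wyner region `ℛ*_GW(P_XY)`. -/
def RegionGW (p : 𝒳 × 𝒴 → ℝ) : Set (ℝ × ℝ × ℝ) :=
  { r | ∃ k, k ≤ Fintype.card 𝒳 * Fintype.card 𝒴 + 2 ∧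
      ∃ K : 𝒳 × 𝒴 → Fin k → ℝ, IsChannel K ∧
        mutInfoW p K ≤ r.1 ∧ condEntX p K ≤ r.2.1 ∧ condEntY p K ≤ r.2.2 }

/-- `X - W - Y` forms a Markov chain (conditional independence given `W`). -/
def MarkovXWY {k : ℕ} (p : 𝒳 × 𝒴 → ℝ) (K : 𝒳 × 𝒴 → Fin k → ℝ) : Prop :=
  ∀ w x y, jointW p K (w, (x, y)) * outW p K w = margWX p K (w, x) * margWY p K (w, y)

/-- The part of the region lying on the Pangloss plane `r0 + r1 + r2 = H(X,Y)`. -/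
def PanglossSet (p : 𝒳 × 𝒴 → ℝ) : Set (ℝ × ℝ × ℝ) :=
  { r | r ∈ RegionGW p ∧ r.1 + r.2.1 + r.2.2 = ent p }

/-- The distribution corresponding to the parameter `θ`, with respect to the
labelling `e` of the support: `P_θ(e i) = θ i` for `i < m`, and the last mass
is `1 - ∑ θ`. -/
def paramDist {α : Type*} {m : ℕ} (e : Fin (m + 1) → α) (θ : Fin m → ℝ) (a : α) : ℝ :=
  (∑ i : Fin m, if e i.castSucc = a then θ i else 0) +
    (if e (Fin.last m) = a then 1 - ∑ i, θ i else 0)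

/-- Variance of `g` under the distribution `p`. -/
def varOf {α : Type*} [Fintype α] (p : α → ℝ) (g : α → ℝ) : ℝ :=
  ∑ a, p a * (g a - ∑ b, p b * g b) ^ 2

/-- The Gaussian upper-tail probability `Q(t)`. -/
def Qfun (t : ℝ) : ℝ :=
  ∫ u in Set.Ioi t, (1 / Real.sqrt (2 * Real.pi)) * Real.exp (-(u ^ 2) / 2)

end

end GW

open GW

namespace GW

/-! ### Type classes and their cardinalities -/

/-- Number of occurrences of the letter `a` in the word `f`. -/
noncomputable def cnt {α : Type*} {n : ℕ} (f : Fin n → α) (a : α) : ℕ :=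
  (Finset.univ.filter fun i => f i = a).card

/-- Type class of the words of length `n` in which every letter `a` occurs `k a` times. -/
noncomputable def tclass {α : Type*} [Fintype α] (n : ℕ) (k : α → ℕ) : Finset (Fin n → α) :=
  Finset.univ.filter fun f => ∀ a, cnt f a = k a

lemma mem_tclass {α : Type*} [Fintype α] {n : ℕ} {k : α → ℕ} {f : Fin n → α} :
    f ∈ tclass n k ↔ ∀ a, cnt f a = k a := by
  simp [tclass]

lemma cnt_comp_perm {α : Type*} {n : ℕ} (f : Fin n → α) (σ : Equiv.Perm (Fin n)) (a : α) :
    cnt (f ∘ σ) a = cnt f a := by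
  unfold cnt
  refine Finset.card_bij (fun i _ => σ i) ?_ ?_ ?_
  · intro i hi; simpa using hi
  · intro i _ j _ h; exact σ.injective h
  · intro i hi
    refine ⟨σ.symm i, by simpa using hi, by simp⟩

lemma sum_cnt {α : Type*} [Fintype α] {n : ℕ} (f : Fin n → α) : ∑ a, cnt f a = n := by
  have h := Finset.card_eq_sum_card_fiberwise (s := (Finset.univ : Finset (Fin n)))
    (t := (Finset.univ : Finset α)) (f := f) (fun i _ => by simp)
  rw [Finset.card_univ, Fintype.card_fin] at h
  exact h.symm

/-- Two words of the same type are permutations of each other. -/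
lemma exists_perm_of_cnt_eq {α : Type*} {n : ℕ} (f g : Fin n → α)
    (h : ∀ a, cnt f a = cnt g a) : ∃ σ : Equiv.Perm (Fin n), f ∘ σ = g := by
  have e : ∀ a, Nonempty ({i // g i = a} ≃ {i // f i = a}) := by
    intro a
    refine ⟨Fintype.equivOfCardEq ?_⟩
    rw [Fintype.card_subtype, Fintype.card_subtype]
    exact (h a).symm
  let E : ∀ a, {i // g i = a} ≃ {i // f i = a} := fun a => (e a).some
  refine ⟨(Equiv.sigmaFiberEquiv g).symm.trans
    ((Equiv.sigmaCongrRight E).trans (Equiv.sigmaFiberEquiv f)), ?_⟩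
  funext i
  exact (E (g i) ⟨i, rfl⟩).2

/-- A nonempty type class has the multinomial cardinality `n! / ∏ k a !`: it is the orbit of any
of its words under the permutations of the coordinates. -/
lemma card_tclass_mul {α : Type*} [Fintype α] {n : ℕ} (f₀ : Fin n → α) :
    (tclass n (cnt f₀)).card * ∏ a, (cnt f₀ a).factorial = n.factorial := by
  have hstab : (Finset.univ.filter fun σ : Equiv.Perm (Fin n) => f₀ ∘ σ = f₀).card
      = ∏ a, (cnt f₀ a).factorial := by
    have := DomMulAct.stabilizer_card f₀
    rw [Fintype.card_subtype] at this
    simp only [Fintype.card_subtype] at this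
    unfold cnt
    convert this
  have hfib : ∀ f ∈ tclass n (cnt f₀),
      (Finset.univ.filter fun σ : Equiv.Perm (Fin n) => f₀ ∘ σ = f).card
        = ∏ a, (cnt f₀ a).factorial := by
    intro f hf
    obtain ⟨τ, rfl⟩ := exists_perm_of_cnt_eq f₀ f fun a => (mem_tclass.1 hf a).symm
    rw [← hstab]
    refine Finset.card_bij' (fun σ _ => τ⁻¹.trans σ) (fun σ _ => τ.trans σ) ?_ ?_ ?_ ?_
    · intro σ hσ
      simp only [Finset.mem_filter, Finset.mem_univ, true_and] at hσ ⊢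
      funext i
      have := congrFun hσ (τ⁻¹ i)
      simpa using this
    · intro σ hσ
      simp only [Finset.mem_filter, Finset.mem_univ, true_and] at hσ ⊢
      funext i
      have := congrFun hσ (τ i)
      simpa using this
    · intro σ _; ext i; simp
    · intro σ _; ext i; simp
  have hcard := Finset.card_eq_sum_card_fiberwise
    (s := (Finset.univ : Finset (Equiv.Perm (Fin n))))
    (t := tclass n (cnt f₀)) (f := fun σ : Equiv.Perm (Fin n) => f₀ ∘ σ)
    (fun σ _ => mem_tclass.2 (cnt_comp_perm f₀ σ))
  rw [Finset.card_univ, Fintype.card_perm, Fintype.card_fin] at hcard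
  rw [hcard, Finset.sum_congr rfl hfib, Finset.sum_const, smul_eq_mul]

lemma factorial_mul_pow_le (k j : ℕ) : k.factorial * k ^ j ≤ j.factorial * k ^ k := by
  rcases le_total k j with h | h
  · calc k.factorial * k ^ j = k.factorial * k ^ (j - k) * k ^ k := by
          rw [mul_assoc, ← pow_add, Nat.sub_add_cancel h]
      _ ≤ _ := Nat.mul_le_mul_right _ (Nat.factorial_mul_pow_sub_le_factorial h)
  · calc k.factorial * k ^ j ≤ (j.factorial * k ^ (k - j)) * k ^ j := by
          refine Nat.mul_le_mul_right _ ?_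
          have h1 := Nat.factorial_mul_descFactorial (Nat.sub_le k j)
          rw [Nat.sub_sub_self h] at h1
          rw [← h1]
          exact Nat.mul_le_mul_left _ (Nat.descFactorial_le_pow _ _)
      _ = _ := by rw [mul_assoc, ← pow_add, Nat.sub_add_cancel h]

lemma prod_comp_cnt {α : Type*} [Fintype α] {n : ℕ} (f : Fin n → α) (k : α → ℕ) :
    ∏ i, k (f i) = ∏ a, k a ^ cnt f a := by
  rw [← Finset.prod_fiberwise_of_maps_to' (s := Finset.univ) (t := Finset.univ) (g := f)
    (fun i _ => by simp) k]
  simp [cnt]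

/-- `|T(k)| ∏ k a ^ k a ≤ n ^ n`: the product distribution `(k/n)ⁿ` gives mass at most `1` to the
type class. -/
lemma card_tclass_mul_pow_le {α : Type*} [Fintype α] {n : ℕ} (k : α → ℕ) (hk : ∑ a, k a = n) :
    (tclass n k).card * ∏ a, k a ^ k a ≤ n ^ n := by
  calc (tclass n k).card * ∏ a, k a ^ k a = ∑ f ∈ tclass n k, ∏ i, k (f i) := by
        rw [← smul_eq_mul, ← Finset.sum_const]
        refine Finset.sum_congr rfl fun f hf => ?_
        rw [prod_comp_cnt]
        exact Finset.prod_congr rfl fun a _ => by rw [mem_tclass.1 hf a]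
    _ ≤ ∑ f : Fin n → α, ∏ i, k (f i) :=
        Finset.sum_le_sum_of_subset (Finset.subset_univ _)
    _ = n ^ n := by rw [← Fintype.sum_pow, hk]

/-- `n ^ n ≤ (n+1)^|α| |T(k)| ∏ k a ^ k a`: under the product distribution `(k/n)ⁿ` the type class
of `k` is the most probable one, and there are at most `(n+1)^|α|` type classes. -/
lemma pow_le_card_tclass {α : Type*} [Fintype α] {n : ℕ} (f₀ : Fin n → α) :
    n ^ n ≤ (n + 1) ^ Fintype.card α *
      ((tclass n (cnt f₀)).card * ∏ a, cnt f₀ a ^ cnt f₀ a) := by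
  set k := cnt f₀ with hk
  have hmax : ∀ j : α → ℕ,
      ∑ f ∈ tclass n j, ∏ i, k (f i) ≤ (tclass n k).card * ∏ a, k a ^ k a := by
    intro j
    rcases (tclass n j).eq_empty_or_nonempty with h | ⟨g, hg⟩
    · simp [h]
    obtain rfl : cnt g = j := funext (mem_tclass.1 hg)
    have h1 : ∑ f ∈ tclass n (cnt g), ∏ i, k (f i)
        = (tclass n (cnt g)).card * ∏ a, k a ^ cnt g a := by
      rw [← smul_eq_mul, ← Finset.sum_const]
      refine Finset.sum_congr rfl fun f hf => ?_
      rw [prod_comp_cnt]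
      exact Finset.prod_congr rfl fun a _ => by rw [mem_tclass.1 hf a]
    rw [h1]
    have hg := card_tclass_mul g
    have hf := card_tclass_mul f₀
    rw [← hk] at hf
    have hle : (∏ a, (k a).factorial) * ∏ a, k a ^ cnt g a
        ≤ (∏ a, (cnt g a).factorial) * ∏ a, k a ^ k a := by
      rw [← Finset.prod_mul_distrib, ← Finset.prod_mul_distrib]
      exact Finset.prod_le_prod' fun a _ => factorial_mul_pow_le _ _
    have hpos : 0 < (∏ a, (k a).factorial) * ∏ a, (cnt g a).factorial :=
      Nat.mul_pos (Finset.prod_pos fun a _ => Nat.factorial_pos _)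
        (Finset.prod_pos fun a _ => Nat.factorial_pos _)
    refine Nat.le_of_mul_le_mul_left ?_ hpos
    calc _ = ((tclass n (cnt g)).card * ∏ a, (cnt g a).factorial) *
            ((∏ a, (k a).factorial) * ∏ a, k a ^ cnt g a) := by ring
      _ ≤ ((tclass n (cnt g)).card * ∏ a, (cnt g a).factorial) *
            ((∏ a, (cnt g a).factorial) * ∏ a, k a ^ k a) := Nat.mul_le_mul_left _ hle
      _ = ((tclass n k).card * ∏ a, (k a).factorial) *
            ((∏ a, (cnt g a).factorial) * ∏ a, k a ^ k a) := by rw [hg, hf]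
      _ = _ := by ring
  calc n ^ n = ∑ f : Fin n → α, ∏ i, k (f i) := by
        rw [← Fintype.sum_pow, hk, sum_cnt]
    _ = ∑ j ∈ Fintype.piFinset (fun _ : α => Finset.range (n + 1)),
          ∑ f ∈ Finset.univ.filter (fun f : Fin n → α => cnt f = j), ∏ i, k (f i) := by
        rw [Finset.sum_fiberwise_of_maps_to]
        intro f _
        rw [Fintype.mem_piFinset]
        intro a
        rw [Finset.mem_range, Nat.lt_succ_iff]
        exact (Finset.card_le_univ _).trans (by simp)
    _ ≤ ∑ j ∈ Fintype.piFinset (fun _ : α => Finset.range (n + 1)),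
          (tclass n k).card * ∏ a, k a ^ k a := by
        refine Finset.sum_le_sum fun j _ => le_trans (le_of_eq ?_) (hmax j)
        refine Finset.sum_congr ?_ fun _ _ => rfl
        ext f
        simp [mem_tclass, funext_iff]
    _ = _ := by simp

end GW
namespace GW

/-! ### Type classes and entropy -/

lemma mul_ent_type {α : Type*} [Fintype α] {n : ℕ} (hn : 0 < n) (k : α → ℕ)
    (hk : ∑ a, k a = n) :
    (n : ℝ) * ent (fun a => (k a : ℝ) / n)
      = n * Real.logb 2 n - ∑ a, (k a : ℝ) * Real.logb 2 (k a) := by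
  have hn' : (n : ℝ) ≠ 0 := by positivity
  have hk' : ∑ a, (k a : ℝ) = n := by exact_mod_cast hk
  have h : ∀ a, (n : ℝ) * ((k a : ℝ) / n * Real.logb 2 ((k a : ℝ) / n))
      = k a * Real.logb 2 (k a) - k a * Real.logb 2 n := by
    intro a
    by_cases h0 : (k a : ℝ) = 0
    · simp [h0]
    rw [Real.logb_div h0 hn']
    field_simp
  unfold ent
  rw [mul_neg, Finset.mul_sum, Finset.sum_congr rfl fun a _ => h a, Finset.sum_sub_distrib,
    ← Finset.sum_mul, hk']
  ring

lemma logb_prod_pow {α : Type*} [Fintype α] (k : α → ℕ) :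
    Real.logb 2 ((∏ a, k a ^ k a : ℕ) : ℝ) = ∑ a, (k a : ℝ) * Real.logb 2 (k a) := by
  push_cast
  rw [Real.logb_prod]
  · simp [Real.logb_pow]
  · intro a _
    by_cases h : k a = 0 <;> simp [h]

lemma prod_self_pow_pos {α : Type*} [Fintype α] (k : α → ℕ) : 0 < ∏ a, k a ^ k a :=
  Finset.prod_pos fun _ _ => Nat.pow_self_pos

lemma logb_card_tclass_le {α : Type*} [Fintype α] {n : ℕ} (hn : 0 < n) (f : Fin n → α) :
    Real.logb 2 (tclass n (cnt f)).card ≤ n * ent (fun a => (cnt f a : ℝ) / n) := by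
  have hpos : 0 < (tclass n (cnt f)).card := Finset.card_pos.2 ⟨f, mem_tclass.2 fun _ => rfl⟩
  have hP := prod_self_pow_pos (cnt f)
  have h : (((tclass n (cnt f)).card * ∏ a, cnt f a ^ cnt f a : ℕ) : ℝ) ≤ ((n ^ n : ℕ) : ℝ) := by
    exact_mod_cast card_tclass_mul_pow_le (cnt f) (sum_cnt f)
  have h2 := Real.logb_le_logb_of_le (b := 2) (by norm_num)
    (by exact_mod_cast Nat.mul_pos hpos hP) h
  rw [Nat.cast_mul, Real.logb_mul (by positivity) (by exact_mod_cast hP.ne'), logb_prod_pow,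
    Nat.cast_pow, Real.logb_pow] at h2
  rw [mul_ent_type hn _ (sum_cnt f)]
  linarith

lemma le_logb_card_tclass {α : Type*} [Fintype α] {n : ℕ} (hn : 0 < n) (f : Fin n → α) :
    n * ent (fun a => (cnt f a : ℝ) / n) - Fintype.card α * Real.logb 2 (n + 1)
      ≤ Real.logb 2 (tclass n (cnt f)).card := by
  have hpos : 0 < (tclass n (cnt f)).card := Finset.card_pos.2 ⟨f, mem_tclass.2 fun _ => rfl⟩
  have hP := prod_self_pow_pos (cnt f)
  have hP' : ((∏ a, cnt f a ^ cnt f a : ℕ) : ℝ) ≠ 0 := by exact_mod_cast hP.ne'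
  have hc' : ((tclass n (cnt f)).card : ℝ) ≠ 0 := by exact_mod_cast hpos.ne'
  have h : ((n ^ n : ℕ) : ℝ) ≤ (((n + 1) ^ Fintype.card α *
      ((tclass n (cnt f)).card * ∏ a, cnt f a ^ cnt f a) : ℕ) : ℝ) :=
    Nat.cast_le.2 (pow_le_card_tclass f)
  have h2 := Real.logb_le_logb_of_le (b := 2) (by norm_num)
    (by exact_mod_cast Nat.pow_pos hn) h
  rw [Nat.cast_mul, Real.logb_mul (by positivity) (by
      rw [Nat.cast_mul]; exact mul_ne_zero hc' hP'), Nat.cast_mul,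
    Real.logb_mul hc' hP', logb_prod_pow, Nat.cast_pow, Real.logb_pow,
    Nat.cast_pow, Real.logb_pow] at h2
  push_cast at h2
  rw [mul_ent_type hn _ (sum_cnt f)]
  linarith

/-! ### Greedy covering -/

/-- If every `s ∈ S` is compatible with at least a fraction `q` of `G`, then `m` greedily chosen
elements of `G` leave at most a fraction `(1 - q) ^ m` of `S` uncovered. -/
lemma greedy_step {σ γ : Type*} (S : Finset σ) (G : Finset γ) (R : σ → γ → Prop)
    (hG : G.Nonempty) (q : ℝ) (hq1 : q ≤ 1)
    (h : ∀ s ∈ S, q * G.card ≤ (G.filter (R s)).card) (m : ℕ) :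
    ∃ C ⊆ G, C.card ≤ m ∧
      ((S.filter fun s => ∀ g ∈ C, ¬ R s g).card : ℝ) ≤ (1 - q) ^ m * S.card := by
  induction m with
  | zero => exact ⟨∅, by simp, by simp, by simp⟩
  | succ m ih =>
    obtain ⟨C, hCG, hCm, hC⟩ := ih
    set U := S.filter fun s => ∀ g ∈ C, ¬ R s g with hU
    have hdc : ∑ g ∈ G, ((U.filter fun s => R s g).card : ℝ)
        = ∑ s ∈ U, ((G.filter (R s)).card : ℝ) := by
      have := Finset.sum_card_bipartiteAbove_eq_sum_card_bipartiteBelow (s := U) (t := G) R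
      unfold Finset.bipartiteAbove Finset.bipartiteBelow at this
      exact_mod_cast this.symm
    have hsum : ∑ g ∈ G, q * (U.card : ℝ) ≤ ∑ g ∈ G, ((U.filter fun s => R s g).card : ℝ) := by
      rw [hdc, Finset.sum_const, nsmul_eq_mul]
      calc (G.card : ℝ) * (q * U.card) = ∑ s ∈ U, q * G.card := by
            rw [Finset.sum_const, nsmul_eq_mul]; ring
        _ ≤ _ := Finset.sum_le_sum fun s hs => h s (Finset.mem_filter.1 hs).1
    obtain ⟨g, hg, hgU⟩ := Finset.exists_le_of_sum_le hG hsum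
    refine ⟨insert g C, Finset.insert_subset hg hCG,
      (Finset.card_insert_le _ _).trans (by omega), ?_⟩
    have heq : (S.filter fun s => ∀ g' ∈ insert g C, ¬ R s g') = U.filter fun s => ¬ R s g := by
      ext s
      simp only [hU, Finset.mem_filter, Finset.mem_insert, forall_eq_or_imp]
      tauto
    rw [heq]
    have hsplit : ((U.filter fun s => R s g).card : ℝ) + (U.filter fun s => ¬ R s g).card
        = U.card := by
      exact_mod_cast Finset.card_filter_add_card_filter_not (s := U) (fun s => R s g)
    calc ((U.filter fun s => ¬ R s g).card : ℝ) ≤ (1 - q) * U.card := by linarith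
      _ ≤ (1 - q) * ((1 - q) ^ m * S.card) := mul_le_mul_of_nonneg_left hC (by linarith)
      _ = _ := by ring

lemma greedy_cover {σ γ : Type*} (S : Finset σ) (G : Finset γ) (R : σ → γ → Prop)
    (hS : S.Nonempty) (hG : G.Nonempty) (q : ℝ) (hq : 0 < q)
    (h : ∀ s ∈ S, q * G.card ≤ (G.filter (R s)).card) :
    ∃ C ⊆ G, (C.card : ℝ) ≤ (Real.log S.card + 1) / q ∧ ∀ s ∈ S, ∃ g ∈ C, R s g := by
  have hGc : (0 : ℝ) < G.card := by exact_mod_cast hG.card_pos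
  have hSc : (0 : ℝ) < S.card := by exact_mod_cast hS.card_pos
  have hq1 : q ≤ 1 := by
    obtain ⟨s, hs⟩ := hS
    have h1 : ((G.filter (R s)).card : ℝ) ≤ G.card := by
      exact_mod_cast Finset.card_filter_le _ _
    have h2 := (h s hs).trans h1
    by_contra hlt
    push Not at hlt
    nlinarith
  have hlog : 0 ≤ Real.log S.card := Real.log_natCast_nonneg _
  set m := ⌊Real.log S.card / q⌋₊ + 1 with hm
  obtain ⟨C, hCG, hCm, hC⟩ := greedy_step S G R hG q hq1 h m
  refine ⟨C, hCG, ?_, ?_⟩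
  · have h1 : (C.card : ℝ) ≤ m := by exact_mod_cast hCm
    have h2 : (m : ℝ) ≤ Real.log S.card / q + 1 := by
      rw [hm]; push_cast
      linarith [Nat.floor_le (div_nonneg hlog hq.le)]
    have h3 : 1 ≤ 1 / q := by rw [le_div_iff₀ hq]; linarith
    rw [add_div]; linarith
  · have hlt : ((S.filter fun s => ∀ g ∈ C, ¬ R s g).card : ℝ) < 1 := by
      refine hC.trans_lt ?_
      have h1 : (1 - q) ^ m ≤ Real.exp (-(q * m)) := by
        calc (1 - q) ^ m ≤ (Real.exp (-q)) ^ m := by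
              refine pow_le_pow_left₀ (by linarith) ?_ m
              linarith [Real.add_one_le_exp (-q)]
          _ = _ := by rw [← Real.exp_nat_mul]; ring_nf
      have h2 : Real.log S.card < q * m := by
        have := Nat.lt_floor_add_one (Real.log S.card / q)
        rw [div_lt_iff₀ hq] at this
        rw [hm]; push_cast; linarith
      calc (1 - q) ^ m * (S.card : ℝ) ≤ Real.exp (-(q * m)) * Real.exp (Real.log S.card) := by
            rw [Real.exp_log hSc]; exact mul_le_mul_of_nonneg_right h1 hSc.le
        _ = Real.exp (Real.log S.card - q * m) := by rw [← Real.exp_add]; ring_nf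
        _ < 1 := by rw [Real.exp_lt_one_iff]; linarith
    have h0 : (S.filter fun s => ∀ g ∈ C, ¬ R s g).card = 0 := by
      have : (S.filter fun s => ∀ g ∈ C, ¬ R s g).card < 1 := by exact_mod_cast hlt
      omega
    intro s hs
    by_contra hcon
    push Not at hcon
    rw [Finset.card_eq_zero, Finset.filter_eq_empty_iff] at h0
    exact h0 hs hcon

/-! ### The type covering lemma -/

/-- By symmetry under coordinate permutations, all words of a marginal type class have the same
number of extensions in the joint type class. -/
lemma card_fiber_snd {β α : Type*} [Fintype β] [Fintype α] {n : ℕ} (h₀ : Fin n → β × α)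
    (f : Fin n → α) (hf : f ∈ tclass n (cnt fun i => (h₀ i).2)) :
    (tclass n (cnt fun i => (h₀ i).2)).card *
      ((tclass n (cnt h₀)).filter fun h => (fun i => (h i).2) = f).card
        = (tclass n (cnt h₀)).card := by
  have hmap : ∀ h ∈ tclass n (cnt h₀), (fun i => (h i).2) ∈ tclass n (cnt fun i => (h₀ i).2) := by
    intro h hh
    obtain ⟨σ, rfl⟩ := exists_perm_of_cnt_eq h₀ h fun a => (mem_tclass.1 hh a).symm
    exact mem_tclass.2 (cnt_comp_perm (fun i => (h₀ i).2) σ)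
  rw [Finset.card_eq_sum_card_fiberwise hmap, ← smul_eq_mul, ← Finset.sum_const]
  refine Finset.sum_congr rfl fun f' hf' => ?_
  obtain ⟨σ, rfl⟩ := exists_perm_of_cnt_eq f f' fun a =>
    (mem_tclass.1 hf a).trans (mem_tclass.1 hf' a).symm
  refine Finset.card_bij' (fun h _ => h ∘ σ) (fun h _ => h ∘ σ.symm) ?_ ?_ ?_ ?_
  · intro h hh
    rw [Finset.mem_filter] at hh ⊢
    obtain ⟨h1, rfl⟩ := hh
    exact ⟨mem_tclass.2 fun a => (cnt_comp_perm h σ a).trans (mem_tclass.1 h1 a), rfl⟩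
  · intro h hh
    rw [Finset.mem_filter] at hh ⊢
    obtain ⟨h1, h2⟩ := hh
    refine ⟨mem_tclass.2 fun a => (cnt_comp_perm h σ.symm a).trans (mem_tclass.1 h1 a), ?_⟩
    funext i
    have := congrFun h2 (σ.symm i)
    simpa using this
  · intro h _; funext i; simp
  · intro h _; funext i; simp

/-- The type class of the second marginal of the type of `h₀` is covered by about
`2 ^ (n I)` words from the type class of the first marginal. -/
lemma type_cover {β α : Type*} [Fintype β] [Fintype α] {n : ℕ} (hn : 0 < n)
    (hα : Fintype.card α ≤ n) (h₀ : Fin n → β × α) :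
    ∃ C ⊆ tclass n (cnt fun i => (h₀ i).1),
      Real.logb 2 C.card ≤ n * (ent (fun b => (cnt (fun i => (h₀ i).1) b : ℝ) / n)
          + ent (fun a => (cnt (fun i => (h₀ i).2) a : ℝ) / n)
          - ent (fun z => (cnt h₀ z : ℝ) / n))
        + (Fintype.card β * Fintype.card α + 2) * Real.logb 2 (n + 1) ∧
      ∀ f ∈ tclass n (cnt fun i => (h₀ i).2), ∃ g ∈ C,
        (fun i => (g i, f i)) ∈ tclass n (cnt h₀) := by
  set TA := tclass n (cnt fun i => (h₀ i).2) with hTA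
  set TB := tclass n (cnt fun i => (h₀ i).1) with hTB
  set T := tclass n (cnt h₀) with hT
  have hTAne : TA.Nonempty := ⟨_, mem_tclass.2 fun _ => rfl⟩
  have hTBne : TB.Nonempty := ⟨_, mem_tclass.2 fun _ => rfl⟩
  have hTne : T.Nonempty := ⟨_, mem_tclass.2 fun _ => rfl⟩
  have cA : (0 : ℝ) < TA.card := by exact_mod_cast hTAne.card_pos
  have cB : (0 : ℝ) < TB.card := by exact_mod_cast hTBne.card_pos
  have cT : (0 : ℝ) < T.card := by exact_mod_cast hTne.card_pos
  obtain ⟨R, hR⟩ : ∃ R : (Fin n → α) → (Fin n → β) → Prop,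
      ∀ f g, R f g ↔ (fun i => (g i, f i)) ∈ T := ⟨_, fun _ _ => Iff.rfl⟩
  obtain ⟨C, hCB, hCcard, hCcov⟩ := greedy_cover TA TB R hTAne hTBne
    ((T.card : ℝ) / (TA.card * TB.card)) (by positivity) (by
      intro f hf
      have h1 := card_fiber_snd h₀ f hf
      rw [← hTA, ← hT] at h1
      have h1' : (T.card : ℝ)
          = TA.card * (T.filter fun h => (fun i => (h i).2) = f).card := by
        exact_mod_cast h1.symm
      have h2 : (T.card : ℝ) / (TA.card * TB.card) * TB.card
          = (T.filter fun h => (fun i => (h i).2) = f).card := by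
        rw [h1']; field_simp
      rw [h2, Nat.cast_le]
      refine Finset.card_le_card_of_injOn (fun h i => (h i).1) ?_ ?_
      · intro h hh
        rw [Finset.mem_coe, Finset.mem_filter] at hh
        rw [Finset.mem_coe, Finset.mem_filter]
        obtain ⟨hh, rfl⟩ := hh
        refine ⟨?_, (hR _ _).2 hh⟩
        obtain ⟨σ, rfl⟩ := exists_perm_of_cnt_eq h₀ h fun a => (mem_tclass.1 hh a).symm
        exact mem_tclass.2 (cnt_comp_perm (fun i => (h₀ i).1) σ)
      · intro h hh h' hh' heq
        rw [Finset.mem_coe, Finset.mem_filter] at hh hh'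
        funext i
        exact Prod.ext (congrFun heq i) ((congrFun hh.2 i).trans (congrFun hh'.2 i).symm))
  refine ⟨C, hCB, ?_, fun f hf => (hCcov f hf).imp fun g hg => ⟨hg.1, (hR f g).1 hg.2⟩⟩
  have hCpos : (0 : ℝ) < C.card := by
    obtain ⟨f, hf⟩ := hTAne
    obtain ⟨g, hg, -⟩ := hCcov f hf
    exact_mod_cast Finset.card_pos.2 ⟨g, hg⟩
  have hn1 : (1 : ℝ) ≤ n := by exact_mod_cast hn
  have hlogA : Real.log TA.card + 1 ≤ ((n : ℝ) + 1) ^ 2 := by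
    have h1 : (TA.card : ℝ) ≤ (Fintype.card α : ℝ) ^ n := by
      have : TA.card ≤ (Fintype.card α) ^ n := (Finset.card_le_univ _).trans (by simp)
      exact_mod_cast this
    have h2 := Real.log_le_log cA h1
    rw [Real.log_pow] at h2
    have h3 : Real.log (Fintype.card α) ≤ n :=
      (Real.log_le_self (by positivity)).trans (by exact_mod_cast hα)
    nlinarith
  have hC2 : (C.card : ℝ) ≤ ((n : ℝ) + 1) ^ 2 * (TA.card * TB.card / T.card) := by
    refine hCcard.trans ?_
    rw [div_div_eq_mul_div, mul_div_assoc]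
    exact mul_le_mul_of_nonneg_right hlogA (by positivity)
  have hlog := Real.logb_le_logb_of_le (b := 2) (by norm_num) hCpos hC2
  rw [Real.logb_mul (by positivity) (by positivity), Real.logb_div (by positivity) cT.ne',
    Real.logb_mul cA.ne' cB.ne', Real.logb_pow] at hlog
  have hA := logb_card_tclass_le hn fun i => (h₀ i).2
  have hB := logb_card_tclass_le hn fun i => (h₀ i).1
  have hJ := le_logb_card_tclass hn h₀
  rw [← hTA] at hA
  rw [← hTB] at hB
  rw [← hT, Fintype.card_prod] at hJ
  push_cast at hJ hlog
  linarith

end GW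
namespace GW

/-! ### Continuity of entropy and rounding to types -/

lemma mul_log_upper {s d : ℝ} (hs : 0 ≤ s) (hd : 0 ≤ d) (h1 : s + d ≤ 1) :
    (s + d) * Real.log (s + d) - s * Real.log s ≤ d := by
  rcases hs.eq_or_lt with rfl | hs
  · have := Real.mul_log_nonpos (x := d) hd (by linarith)
    simp only [zero_add, zero_mul, sub_zero]
    linarith
  have h2 : s * (Real.log (s + d) - Real.log s) ≤ d := by
    rw [← Real.log_div (by positivity) hs.ne']
    have h3 := Real.log_le_sub_one_of_pos (x := (s + d) / s) (by positivity)
    have h4 : (s + d) / s - 1 = d / s := by field_simp; ring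
    rw [h4] at h3
    calc s * Real.log ((s + d) / s) ≤ s * (d / s) := mul_le_mul_of_nonneg_left h3 hs.le
      _ = d := by field_simp
  have h5 : d * Real.log (s + d) ≤ 0 :=
    mul_nonpos_of_nonneg_of_nonpos hd (Real.log_nonpos (by linarith) h1)
  linarith

lemma mul_log_lower {s d : ℝ} (hs : 0 ≤ s) (hd : 0 ≤ d) :
    d * Real.log d ≤ (s + d) * Real.log (s + d) - s * Real.log s := by
  rcases hs.eq_or_lt with rfl | hs
  · simp
  rcases hd.eq_or_lt with rfl | hd
  · simp
  have h1 := Real.log_le_log hs (by linarith : s ≤ s + d)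
  have h2 := Real.log_le_log hd (by linarith : d ≤ s + d)
  nlinarith

/-- For `d ≤ D / n` one has `-d log d ≤ (D / n) log n`, by the tangent of `x ↦ -x log x`
at `1 / n`. -/
lemma neg_mul_log_le {d D : ℝ} {n : ℕ} (hn : 3 ≤ n) (hd : 0 ≤ d) (hD : 1 ≤ D)
    (hdD : d ≤ D / n) : -(d * Real.log d) ≤ D / n * Real.log n ∧ d ≤ D / n * Real.log n := by
  have hn3 : (3 : ℝ) ≤ n := by exact_mod_cast hn
  have hn0 : (0 : ℝ) < n := by linarith
  have hlog : 1 ≤ Real.log n := by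
    rw [Real.le_log_iff_exp_le hn0]
    linarith [Real.exp_one_lt_d9]
  have hDn : 0 ≤ D / n := by positivity
  refine ⟨?_, by nlinarith⟩
  rcases hd.eq_or_lt with rfl | hd
  · simp only [zero_mul, neg_zero]; positivity
  have h1 := Real.log_le_sub_one_of_pos (x := 1 / (n * d)) (by positivity)
  rw [Real.log_div one_ne_zero (by positivity), Real.log_one, Real.log_mul hn0.ne' hd.ne'] at h1
  have h2 : d * (1 / (n * d) - 1) = 1 / n - d := by field_simp
  have h3 : 1 / (n : ℝ) ≤ D / n := by gcongr
  have h4 := mul_le_mul_of_nonneg_left h1 hd.le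
  rw [h2] at h4
  nlinarith [mul_le_mul_of_nonneg_right hdD (by linarith : 0 ≤ Real.log n - 1)]

lemma abs_mul_logb_sub_le {s t D : ℝ} {n : ℕ} (hn : 3 ≤ n) (hs : 0 ≤ s) (ht : 0 ≤ t)
    (hs1 : s ≤ 1) (ht1 : t ≤ 1) (hD : 1 ≤ D) (h : |s - t| ≤ D / n) :
    |s * Real.logb 2 s - t * Real.logb 2 t| ≤ D / n * Real.logb 2 n := by
  wlog hst : t ≤ s generalizing s t
  · rw [abs_sub_comm] at h ⊢
    exact this ht hs ht1 hs1 h (le_of_not_ge hst)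
  have hd : 0 ≤ s - t := by linarith
  rw [abs_of_nonneg hd] at h
  have hlog2 : 0 < Real.log 2 := Real.log_pos (by norm_num)
  have hu := mul_log_upper ht hd (by linarith)
  have hl := mul_log_lower ht hd
  obtain ⟨h1, h2⟩ := neg_mul_log_le hn hd hD h
  rw [add_sub_cancel] at hu hl
  have e : s * Real.logb 2 s - t * Real.logb 2 t
      = (s * Real.log s - t * Real.log t) / Real.log 2 := by
    unfold Real.logb; ring
  rw [e, abs_div, abs_of_pos hlog2, Real.logb, ← mul_div_assoc]
  refine div_le_div_of_nonneg_right ?_ hlog2.le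
  rw [abs_le]
  constructor <;> linarith

lemma abs_ent_sub_le {α : Type*} [Fintype α] {n : ℕ} (hn : 3 ≤ n) {D : ℝ} (hD : 1 ≤ D)
    {p q : α → ℝ} (hp : IsProb p) (hq : IsProb q) (h : ∀ a, |p a - q a| ≤ D / n) :
    n * |ent p - ent q| ≤ Fintype.card α * D * Real.logb 2 n := by
  have le1 : ∀ {r : α → ℝ}, IsProb r → ∀ a, r a ≤ 1 := fun hr a =>
    (Finset.single_le_sum (fun b _ => hr.1 b) (Finset.mem_univ a)).trans hr.2.le
  have hn0 : (0 : ℝ) < n := by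
    have : (3 : ℝ) ≤ n := by exact_mod_cast hn
    linarith
  have h1 : |ent p - ent q| ≤ ∑ _a : α, D / n * Real.logb 2 n := by
    have : ent p - ent q
        = ∑ a, (q a * Real.logb 2 (q a) - p a * Real.logb 2 (p a)) := by
      unfold ent; rw [Finset.sum_sub_distrib]; ring
    rw [this]
    refine (Finset.abs_sum_le_sum_abs _ _).trans (Finset.sum_le_sum fun a _ => ?_)
    refine abs_mul_logb_sub_le hn (hq.1 a) (hp.1 a) (le1 hq a) (le1 hp a) hD ?_
    rw [abs_sub_comm]; exact h a
  rw [Finset.sum_const, Finset.card_univ, nsmul_eq_mul] at h1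
  calc n * |ent p - ent q| ≤ n * (Fintype.card α * (D / n * Real.logb 2 n)) :=
        mul_le_mul_of_nonneg_left h1 hn0.le
    _ = _ := by field_simp

/-- Nonnegative reals with an integer sum can be rounded to naturals with the same sum. -/
lemma exists_rounding {β : Type*} [Fintype β] (v : β → ℝ) (hv : ∀ b, 0 ≤ v b) (m : ℕ)
    (hm : ∑ b, v b = m) : ∃ c : β → ℕ, ∑ b, c b = m ∧ ∀ b, |v b - c b| ≤ 1 := by
  have hfl : ∑ b, ⌊v b⌋₊ ≤ m := by
    have : ((∑ b, ⌊v b⌋₊ : ℕ) : ℝ) ≤ m := by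
      rw [← hm]; push_cast
      exact Finset.sum_le_sum fun b _ => Nat.floor_le (hv b)
    exact_mod_cast this
  have hup : m ≤ ∑ b, ⌊v b⌋₊ + Fintype.card β := by
    have : (m : ℝ) ≤ ((∑ b, ⌊v b⌋₊ + Fintype.card β : ℕ) : ℝ) := by
      rw [← hm]; push_cast
      calc ∑ b, v b ≤ ∑ b, ((⌊v b⌋₊ : ℝ) + 1) :=
            Finset.sum_le_sum fun b _ => (Nat.lt_floor_add_one _).le
        _ = _ := by rw [Finset.sum_add_distrib]; simp
    exact_mod_cast this
  obtain ⟨s, -, hs⟩ := Finset.exists_subset_card_eq (s := (Finset.univ : Finset β))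
    (n := m - ∑ b, ⌊v b⌋₊) (by rw [Finset.card_univ]; omega)
  refine ⟨fun b => ⌊v b⌋₊ + if b ∈ s then 1 else 0, ?_, fun b => ?_⟩
  · rw [Finset.sum_add_distrib]
    simp only [Finset.sum_ite_mem, Finset.univ_inter, Finset.sum_const, smul_eq_mul, mul_one]
    omega
  · have h1 := Nat.floor_le (hv b)
    have h2 := Nat.lt_floor_add_one (v b)
    dsimp only
    rw [abs_le]
    split_ifs <;> push_cast <;> constructor <;> linarith

/-! ### Marginals of a joint distribution -/

variable {𝒳 𝒴 𝒲 : Type*} [Fintype 𝒳] [Fintype 𝒴] [Fintype 𝒲]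

lemma isProb_jointW {p : 𝒳 × 𝒴 → ℝ} {K : 𝒳 × 𝒴 → 𝒲 → ℝ} (hp : IsProb p) (hK : IsChannel K) :
    IsProb (jointW p K) := by
  refine ⟨fun z => mul_nonneg (hp.1 _) ((hK _).1 _), ?_⟩
  unfold jointW
  rw [Fintype.sum_prod_type_right, ← hp.2]
  refine Finset.sum_congr rfl fun a _ => ?_
  simp only
  rw [← Finset.mul_sum, (hK a).2, mul_one]

lemma isProb_outW {p : 𝒳 × 𝒴 → ℝ} {K : 𝒳 × 𝒴 → 𝒲 → ℝ} (hp : IsProb p) (hK : IsChannel K) :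
    IsProb (outW p K) := by
  refine ⟨fun w => Finset.sum_nonneg fun a _ => (isProb_jointW hp hK).1 (w, a), ?_⟩
  have h := (isProb_jointW hp hK).2
  rwa [Fintype.sum_prod_type] at h

lemma isProb_margWX {p : 𝒳 × 𝒴 → ℝ} {K : 𝒳 × 𝒴 → 𝒲 → ℝ} (hp : IsProb p) (hK : IsChannel K) :
    IsProb (margWX p K) := by
  refine ⟨fun z => Finset.sum_nonneg fun y _ => (isProb_jointW hp hK).1 (z.1, z.2, y), ?_⟩
  have h := (isProb_outW hp hK).2
  unfold margWX
  rw [Fintype.sum_prod_type, ← h]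
  refine Finset.sum_congr rfl fun w _ => ?_
  rw [outW, Fintype.sum_prod_type]

lemma isProb_margWY {p : 𝒳 × 𝒴 → ℝ} {K : 𝒳 × 𝒴 → 𝒲 → ℝ} (hp : IsProb p) (hK : IsChannel K) :
    IsProb (margWY p K) := by
  refine ⟨fun z => Finset.sum_nonneg fun x _ => (isProb_jointW hp hK).1 (z.1, x, z.2), ?_⟩
  have h := (isProb_outW hp hK).2
  unfold margWY
  rw [Fintype.sum_prod_type, ← h]
  refine Finset.sum_congr rfl fun w _ => ?_
  rw [outW, Fintype.sum_prod_type_right]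

/-! ### Change of auxiliary alphabet -/

lemma ent_of_injective {α β : Type*} [Fintype α] [Fintype β] {e : α → β}
    (he : Function.Injective e) {p : α → ℝ} {q : β → ℝ} (h1 : ∀ a, q (e a) = p a)
    (h2 : ∀ b, b ∉ Set.range e → q b = 0) : ent q = ent p := by
  unfold ent
  congr 1
  symm
  refine Fintype.sum_of_injective e he _ _ (fun b hb => by simp [h2 b hb]) fun a => ?_
  rw [h1]

/-- A test channel with `k ≤ |𝒲|` outputs, viewed as a test channel with outputs in `𝒲`. -/
lemma exists_embedded_channel {k : ℕ} (hk : k ≤ Fintype.card 𝒲) (p : 𝒳 × 𝒴 → ℝ)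
    (K : 𝒳 × 𝒴 → Fin k → ℝ) (hK : IsChannel K) :
    ∃ K' : 𝒳 × 𝒴 → 𝒲 → ℝ, IsChannel K' ∧ condEntX p K' = condEntX p K ∧
      condEntY p K' = condEntY p K ∧ mutInfoW p K' = mutInfoW p K := by
  obtain ⟨e⟩ : Nonempty (Fin k ↪ 𝒲) :=
    Function.Embedding.nonempty_of_card_le (by simpa using hk)
  set K' : 𝒳 × 𝒴 → 𝒲 → ℝ := fun a => Function.extend e (K a) 0 with hK'
  have h1 : ∀ a j, K' a (e j) = K a j := fun a j => e.injective.extend_apply _ _ _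
  have h2 : ∀ a w, w ∉ Set.range e → K' a w = 0 := fun a w hw =>
    Function.extend_apply' _ _ _ (by simpa using hw)
  have hout : ent (outW p K') = ent (outW p K) := by
    refine ent_of_injective e.injective (fun j => ?_) fun w hw => ?_
    · simp [outW, h1]
    · simp [outW, h2 _ w hw]
  have hWX : ent (margWX p K') = ent (margWX p K) := by
    refine ent_of_injective (e := Prod.map e id)
      (e.injective.prodMap Function.injective_id) (fun j => ?_) fun w hw => ?_
    · simp [margWX, h1]
    · have : w.1 ∉ Set.range e := fun ⟨j, hj⟩ => hw ⟨(j, w.2), Prod.ext hj rfl⟩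
      simp [margWX, h2 _ _ this]
  have hWY : ent (margWY p K') = ent (margWY p K) := by
    refine ent_of_injective (e := Prod.map e id)
      (e.injective.prodMap Function.injective_id) (fun j => ?_) fun w hw => ?_
    · simp [margWY, h1]
    · have : w.1 ∉ Set.range e := fun ⟨j, hj⟩ => hw ⟨(j, w.2), Prod.ext hj rfl⟩
      simp [margWY, h2 _ _ this]
  have hJ : ent (jointW p K') = ent (jointW p K) := by
    refine ent_of_injective (e := Prod.map e id)
      (e.injective.prodMap Function.injective_id) (fun j => ?_) fun w hw => ?_
    · simp [jointW, h1]
    · have : w.1 ∉ Set.range e := fun ⟨j, hj⟩ => hw ⟨(j, w.2), Prod.ext hj rfl⟩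
      simp [jointW, h2 _ _ this]
  refine ⟨K', fun a => ⟨fun w => ?_, ?_⟩, ?_, ?_, ?_⟩
  · by_cases hw : w ∈ Set.range e
    · obtain ⟨j, rfl⟩ := hw
      rw [h1]; exact (hK a).1 j
    · rw [h2 a w hw]
  · rw [← (hK a).2]
    symm
    exact Fintype.sum_of_injective e e.injective _ _ (h2 a) fun j => (h1 a j).symm
  · rw [condEntX, condEntX, hout, hWX]
  · rw [condEntY, condEntY, hout, hWY]
  · rw [mutInfoW, mutInfoW, hout, hJ]

end GW
namespace GW

/-! ### Words with prescribed type -/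

lemma exists_word {α : Type*} [Fintype α] {n : ℕ} (k : α → ℕ) (hk : ∑ a, k a = n) :
    ∃ f : Fin n → α, ∀ a, cnt f a = k a := by
  have e : Fin n ≃ Σ a, Fin (k a) := Fintype.equivOfCardEq (by simp [hk])
  refine ⟨fun i => (e i).1, fun a => ?_⟩
  have h : (Finset.univ.filter fun s : Σ a, Fin (k a) => s.1 = a).card = k a := by
    rw [← Fintype.card_subtype, Fintype.card_congr (Equiv.sigmaSubtype a), Fintype.card_fin]
  rw [← h]
  refine Finset.card_bij' (fun i _ => e i) (fun s _ => e.symm s) ?_ ?_ ?_ ?_ <;> simp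

lemma cnt_snd {α β : Type*} [Fintype β] {n : ℕ} (h : Fin n → β × α) (a : α) :
    cnt (fun i => (h i).2) a = ∑ b, cnt h (b, a) := by
  unfold cnt
  rw [Finset.card_eq_sum_card_fiberwise (f := fun i => (h i).1) (t := Finset.univ)
    (fun i _ => by simp)]
  refine Finset.sum_congr rfl fun b _ => ?_
  rw [Finset.filter_filter]
  congr 1
  ext i
  simp [Prod.ext_iff, and_comm]

lemma cnt_fst {α β : Type*} [Fintype α] {n : ℕ} (h : Fin n → β × α) (b : β) :
    cnt (fun i => (h i).1) b = ∑ a, cnt h (b, a) := by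
  unfold cnt
  rw [Finset.card_eq_sum_card_fiberwise (f := fun i => (h i).2) (t := Finset.univ)
    (fun i _ => by simp)]
  refine Finset.sum_congr rfl fun a _ => ?_
  rw [Finset.filter_filter]
  congr 1
  ext i
  simp [Prod.ext_iff]

lemma abs_sum_sub_sum_le {ι : Type*} [Fintype ι] (u v : ι → ℝ) {n : ℕ}
    (huv : ∀ i, |u i - v i| ≤ 1 / n) :
    |∑ i, u i - ∑ i, v i| ≤ (Fintype.card ι : ℝ) / n := by
  rw [← Finset.sum_sub_distrib]
  refine (Finset.abs_sum_le_sum_abs _ _).trans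
    ((Finset.sum_le_sum fun i _ => huv i).trans (le_of_eq ?_))
  rw [Finset.sum_const, Finset.card_univ, nsmul_eq_mul, mul_one_div]

/-- The feasible set defining `Rgw` is nonempty: `W = (X, Y)` has `H(X|W) = H(Y|W) = 0`. -/
lemma Rgw_set_nonempty {𝒳 𝒴 : Type*} [Fintype 𝒳] [Fintype 𝒴] (p : 𝒳 × 𝒴 → ℝ) {r1 r2 : ℝ}
    (hr1 : 0 < r1) (hr2 : 0 < r2) :
    { ρ : ℝ | ∃ k, k ≤ Fintype.card 𝒳 * Fintype.card 𝒴 + 2 ∧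
      ∃ K : 𝒳 × 𝒴 → Fin k → ℝ, IsChannel K ∧
        condEntX p K ≤ r1 ∧ condEntY p K ≤ r2 ∧ ρ = mutInfoW p K }.Nonempty := by
  have e : 𝒳 × 𝒴 ≃ Fin (Fintype.card 𝒳 * Fintype.card 𝒴) :=
    Fintype.equivOfCardEq (by simp)
  set K : 𝒳 × 𝒴 → Fin (Fintype.card 𝒳 * Fintype.card 𝒴) → ℝ :=
    fun a j => if a = e.symm j then 1 else 0 with hKdef
  have hout : ∀ j, outW p K j = p (e.symm j) := fun j => by simp [outW, hKdef]
  have hX : ent (margWX p K) = ent (outW p K) := by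
    refine ent_of_injective (e := fun j => (j, (e.symm j).1))
      (fun i j h => congrArg Prod.fst h) (fun j => ?_) fun z hz => ?_
    · rw [hout]
      simp [margWX, hKdef, Prod.ext_iff]
    · refine Finset.sum_eq_zero fun y _ => ?_
      have : (z.2, y) ≠ e.symm z.1 := fun h => hz ⟨z.1, Prod.ext rfl (by simp [← h])⟩
      simp [hKdef, this]
  have hY : ent (margWY p K) = ent (outW p K) := by
    refine ent_of_injective (e := fun j => (j, (e.symm j).2))
      (fun i j h => congrArg Prod.fst h) (fun j => ?_) fun z hz => ?_
    · rw [hout]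
      simp [margWY, hKdef, Prod.ext_iff]
    · refine Finset.sum_eq_zero fun x _ => ?_
      have : (x, z.2) ≠ e.symm z.1 := fun h => hz ⟨z.1, Prod.ext rfl (by simp [← h])⟩
      simp [hKdef, this]
  refine ⟨mutInfoW p K, _, Nat.le_add_right _ 2, K, fun a => ⟨fun j => ?_, ?_⟩, ?_, ?_, rfl⟩
  · simp only [hKdef]; split_ifs <;> norm_num
  · simp only [hKdef, Equiv.eq_symm_apply]
    simp
  · rw [condEntX, hX, sub_self]; exact hr1.le
  · rw [condEntY, hY, sub_self]; exact hr2.le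

end GW

/-- Corollary 1: for all `n` larger than a constant depending
only on `|𝒳|, |𝒴|, |𝒲|`, every joint type `P_{X̄Ȳ}` of length `n` and every
`r1, r2 > 0` admit a conditional type `P_{W̄|X̄Ȳ}` with
`n H(X̄|W̄) ≤ n r1 + 2|𝒳||𝒴||𝒲| log n` and
`n H(Ȳ|W̄) ≤ n r2 + 2|𝒳||𝒴||𝒲| log n`, and a codebook `𝒞_n ⊆ 𝒯ⁿ_{W̄}` with
`log|𝒞_n| ≤ n R(r1,r2|P_{X̄Ȳ}) + (3|𝒳||𝒴||𝒲|+4) log(n+1)` covering the type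
class `𝒯ⁿ_{X̄Ȳ}`. -/
theorem type_covering_corollary
    {𝒳 𝒴 𝒲 : Type*} [Fintype 𝒳] [Fintype 𝒴] [Fintype 𝒲] [Nonempty 𝒲]
    (hW : Fintype.card 𝒳 * Fintype.card 𝒴 + 2 ≤ Fintype.card 𝒲) :
    ∃ n0 : ℕ, ∀ n, n0 ≤ n →
      ∀ p : 𝒳 × 𝒴 → ℝ, IsJointType n p →
      ∀ r1 r2 : ℝ, 0 < r1 → 0 < r2 →
      ∃ V : 𝒳 × 𝒴 → 𝒲 → ℝ, IsCondType n p V ∧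
        (n : ℝ) * condEntX p V ≤ n * r1
          + 2 * (Fintype.card 𝒳 * Fintype.card 𝒴 * Fintype.card 𝒲 : ℝ)
            * Real.logb 2 n ∧
        (n : ℝ) * condEntY p V ≤ n * r2
          + 2 * (Fintype.card 𝒳 * Fintype.card 𝒴 * Fintype.card 𝒲 : ℝ)
            * Real.logb 2 n ∧
        ∃ C : Finset (Fin n → 𝒲),
          (∀ g ∈ C, ∀ w, empDist g w = outW p V w) ∧
          Real.logb 2 C.card ≤ (n : ℝ) * Rgw p r1 r2
            + (3 * (Fintype.card 𝒳 * Fintype.card 𝒴 * Fintype.card 𝒲 : ℝ) + 4)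
              * Real.logb 2 (n + 1) ∧
          ∀ f : Fin n → 𝒳 × 𝒴, (∀ a, empDist f a = p a) →
            ∃ g ∈ C, ∀ z : 𝒲 × 𝒳 × 𝒴,
              empDist (fun i => (g i, f i)) z = jointW p V z := by
  refine ⟨max 3 (Fintype.card 𝒳 * Fintype.card 𝒴), fun n hn p hp r1 r2 hr1 hr2 => ?_⟩
  have hn3 : 3 ≤ n := (le_max_left _ _).trans hn
  have hnXY : Fintype.card (𝒳 × 𝒴) ≤ n := by
    rw [Fintype.card_prod]; exact (le_max_right _ _).trans hn
  have hn0 : 0 < n := by omega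
  have hnR : (0 : ℝ) < n := by exact_mod_cast hn0
  obtain ⟨f₀, hf₀⟩ := hp
  have hpk : ∀ a, p a = (cnt f₀ a : ℝ) / n := hf₀
  have hpP : IsProb p := by
    refine ⟨fun a => by rw [hpk]; positivity, ?_⟩
    simp_rw [hpk]
    rw [← Finset.sum_div, ← Nat.cast_sum, sum_cnt, div_self hnR.ne']
  have hX1 : (1 : ℝ) ≤ Fintype.card 𝒳 := by
    exact_mod_cast Fintype.card_pos_iff.2 ⟨(f₀ ⟨0, hn0⟩).1⟩
  have hY1 : (1 : ℝ) ≤ Fintype.card 𝒴 := by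
    exact_mod_cast Fintype.card_pos_iff.2 ⟨(f₀ ⟨0, hn0⟩).2⟩
  have hL : 0 < Real.logb 2 ((n : ℝ) + 1) := Real.logb_pos (by norm_num) (by linarith)
  -- Whether the infimum is attained is irrelevant: a gap of `log (n + 1) / n` is affordable.
  obtain ⟨_, ⟨k, hk, K₀, hK₀, hX₀, hY₀, rfl⟩, hI₀⟩ :=
    Real.lt_sInf_add_pos (Rgw_set_nonempty p hr1 hr2)
      (ε := Real.logb 2 ((n : ℝ) + 1) / n) (by positivity)
  obtain ⟨K, hK, eX, eY, eI⟩ := exists_embedded_channel (𝒲 := 𝒲) (hk.trans hW) p K₀ hK₀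
  rw [← eX] at hX₀
  rw [← eY] at hY₀
  rw [← eI] at hI₀
  change _ < Rgw p r1 r2 + _ at hI₀
  obtain ⟨c, hc⟩ : ∃ c : 𝒳 × 𝒴 → 𝒲 → ℕ, ∀ a, ∑ w, c a w = cnt f₀ a ∧
      ∀ w, |(cnt f₀ a : ℝ) * K a w - c a w| ≤ 1 := by
    choose c hc using fun a => exists_rounding (fun w => (cnt f₀ a : ℝ) * K a w)
      (fun w => mul_nonneg (Nat.cast_nonneg _) ((hK a).1 w)) (cnt f₀ a)
      (by rw [← Finset.mul_sum, (hK a).2, mul_one])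
    exact ⟨c, hc⟩
  -- Off the support of `p` the channel is arbitrary; there `K` is kept.
  set V : 𝒳 × 𝒴 → 𝒲 → ℝ := fun a w =>
    if cnt f₀ a = 0 then K a w else (c a w : ℝ) / cnt f₀ a with hVdef
  have hV : IsChannel V := by
    intro a
    by_cases h0 : cnt f₀ a = 0
    · have : V a = K a := by funext w; simp [hVdef, h0]
      rw [this]; exact hK a
    · have h0' : (cnt f₀ a : ℝ) ≠ 0 := by exact_mod_cast h0
      have : V a = fun w => (c a w : ℝ) / cnt f₀ a := by funext w; simp [hVdef, h0]
      rw [this]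
      refine ⟨fun w => by positivity, ?_⟩
      rw [← Finset.sum_div, ← Nat.cast_sum, (hc a).1, div_self h0']
  have hpV : ∀ a w, p a * V a w = (c a w : ℝ) / n := by
    intro a w
    by_cases h0 : cnt f₀ a = 0
    · have h1 : c a w = 0 := by
        have h2 := (hc a).1
        rw [h0, Finset.sum_eq_zero_iff] at h2
        exact h2 w (Finset.mem_univ w)
      rw [hpk, h0, h1]; simp
    · have h0' : (cnt f₀ a : ℝ) ≠ 0 := by exact_mod_cast h0
      simp only [hVdef, if_neg h0, hpk]
      field_simp
  have hdiff : ∀ a w, |p a * K a w - p a * V a w| ≤ 1 / n := by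
    intro a w
    have h1 : p a * K a w - p a * V a w = ((cnt f₀ a : ℝ) * K a w - c a w) / n := by
      rw [hpV, hpk]; ring
    rw [h1, abs_div, abs_of_pos hnR]
    exact div_le_div_of_nonneg_right ((hc a).2 w) hnR.le
  have dJ := abs_ent_sub_le hn3 (D := 1) le_rfl (isProb_jointW hpP hK) (isProb_jointW hpP hV)
    (fun z => hdiff z.2 z.1)
  have dW := abs_ent_sub_le hn3 (D := (Fintype.card (𝒳 × 𝒴) : ℝ))
    (by rw [Fintype.card_prod]; push_cast; nlinarith)
    (isProb_outW hpP hK) (isProb_outW hpP hV)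
    (fun w => abs_sum_sub_sum_le _ _ fun a => hdiff a w)
  have dX := abs_ent_sub_le hn3 hY1 (isProb_margWX hpP hK) (isProb_margWX hpP hV)
    (fun z => abs_sum_sub_sum_le _ _ fun y => hdiff (z.2, y) z.1)
  have dY := abs_ent_sub_le hn3 hX1 (isProb_margWY hpP hK) (isProb_margWY hpP hV)
    (fun z => abs_sum_sub_sum_le _ _ fun x => hdiff (x, z.2) z.1)
  simp only [Fintype.card_prod, Nat.cast_mul] at dJ dW dX dY
  set N : ℝ := (Fintype.card 𝒳 * Fintype.card 𝒴 * Fintype.card 𝒲 : ℝ) with hN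
  have hlogn : Real.logb 2 n ≤ Real.logb 2 ((n : ℝ) + 1) :=
    Real.logb_le_logb_of_le (by norm_num) hnR (by linarith)
  have lipJ : |n * ent (jointW p K) - n * ent (jointW p V)| ≤ N * Real.logb 2 n := by
    rw [← mul_sub, abs_mul, abs_of_pos hnR]; refine dJ.trans (le_of_eq ?_); rw [hN]; ring
  have lipW : |n * ent (outW p K) - n * ent (outW p V)| ≤ N * Real.logb 2 n := by
    rw [← mul_sub, abs_mul, abs_of_pos hnR]; refine dW.trans (le_of_eq ?_); rw [hN]; ring
  have lipX : |n * ent (margWX p K) - n * ent (margWX p V)| ≤ N * Real.logb 2 n := by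
    rw [← mul_sub, abs_mul, abs_of_pos hnR]; refine dX.trans (le_of_eq ?_); rw [hN]; ring
  have lipY : |n * ent (margWY p K) - n * ent (margWY p V)| ≤ N * Real.logb 2 n := by
    rw [← mul_sub, abs_mul, abs_of_pos hnR]; refine dY.trans (le_of_eq ?_); rw [hN]; ring
  rw [abs_le] at lipJ lipW lipX lipY
  have hX₁ := mul_le_mul_of_nonneg_left hX₀ hnR.le
  have hY₁ := mul_le_mul_of_nonneg_left hY₀ hnR.le
  have hI₁ := mul_lt_mul_of_pos_left hI₀ hnR
  rw [mul_add, mul_div_cancel₀ _ hnR.ne'] at hI₁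
  unfold mutInfoW at hI₁
  unfold condEntX at hX₁
  unfold condEntY at hY₁
  obtain ⟨h₀, hh₀⟩ := exists_word (n := n) (fun z : 𝒲 × 𝒳 × 𝒴 => c z.2 z.1) (by
    rw [Fintype.sum_prod_type_right, ← sum_cnt f₀]
    exact Finset.sum_congr rfl fun a _ => (hc a).1)
  have hsnd : cnt (fun i => (h₀ i).2) = cnt f₀ := by
    funext a
    rw [cnt_snd, ← (hc a).1]
    exact Finset.sum_congr rfl fun w _ => hh₀ (w, a)
  have eJ : (fun z => (cnt h₀ z : ℝ) / n) = jointW p V := by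
    funext z
    rw [hh₀]
    exact (hpV z.2 z.1).symm
  have eA : (fun a => (cnt (fun i => (h₀ i).2) a : ℝ) / n) = p := by
    funext a; rw [hsnd, hpk]
  have eW : (fun w => (cnt (fun i => (h₀ i).1) w : ℝ) / n) = outW p V := by
    funext w
    rw [cnt_fst, outW, Nat.cast_sum, Finset.sum_div]
    refine Finset.sum_congr rfl fun a _ => ?_
    rw [hh₀, hpV]
  obtain ⟨C, hCsub, hCcard, hCcov⟩ := type_cover hn0 hnXY h₀
  rw [eJ, eA, eW, Fintype.card_prod, Nat.cast_mul] at hCcard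
  refine ⟨V, ⟨hV, fun a ha w => ⟨c a w, ?_⟩⟩, ?_, ?_, C, ?_, ?_, ?_⟩
  · rw [eq_div_iff (mul_pos hnR ha).ne', mul_comm, mul_assoc, hpV, mul_div_cancel₀ _ hnR.ne']
  · unfold condEntX; linarith [lipX.1, lipX.2, lipW.1, lipW.2]
  · unfold condEntY; linarith [lipY.1, lipY.2, lipW.1, lipW.2]
  · intro g hg w
    rw [← congrFun eW w, ← mem_tclass.1 (hCsub hg) w]
    rfl
  · have hN0 : 0 ≤ N := by positivity
    have h2 : (Fintype.card 𝒲 * (Fintype.card 𝒳 * Fintype.card 𝒴) + 2 : ℝ) = N + 2 := by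
      rw [hN]; ring
    rw [h2] at hCcard
    have h3 := mul_le_mul_of_nonneg_left hlogn hN0
    linarith [lipW.1, lipW.2, lipJ.1, lipJ.2]
  · intro f hf
    have hfA : f ∈ tclass n (cnt fun i => (h₀ i).2) := by
      rw [mem_tclass, hsnd]
      intro a
      have h1 : (cnt f a : ℝ) / n = (cnt f₀ a : ℝ) / n := (hf a).trans (hpk a)
      exact_mod_cast (div_left_inj' hnR.ne').1 h1
    obtain ⟨g, hg, hgf⟩ := hCcov f hfA
    refine ⟨g, hg, fun z => ?_⟩
    rw [← congrFun eJ z, ← mem_tclass.1 hgf z]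
    rfl
end

section
/- Set α_n = β_n = (log n)/n. For any Gray-Wyner code Φ_n of blocklength n with message sets ℳ0^{(n)},ℳ1^{(n)},ℳ2^{(n)}, it holds that P_e(Φ_n | P_XYⁿ) ≥ Pr( r_{0,n} < R(r_{1,n}, r_{2,n} | t_{XⁿYⁿ}) ) − 1/n, where (Xⁿ,Yⁿ) ∼ P_XYⁿ, t_{XⁿYⁿ} is its joint type, r_{0,n} := (1/n) log|ℳ0^{(n)}| + |𝒳||𝒴| log(n+1)/n + (α_n+β_n), r_{1,n} := (1/n) log|ℳ1^{(n)}| + 1/n + 2^{−nβ_n} log|𝒳|, and r_{2,n} := (1/n) log|ℳ2^{(n)}| + 1/n + 2^{−nβ_n} log|𝒴|. -/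
/-!
Let `D` be the set of correctly decoded words of a given joint type `Q`. For a uniform word `f ∈ D`
and an independent uniform time `i`, the letter `(X, Y) = f i` has law exactly `Q`. The auxiliary
variable `W = (i, enc0 f, f_{<i})` makes the classical Gray-Wyner converse exact on `D`: the chain rule
(`telescope`), together with the fact that the first (second) component of `f` is a function of
`enc0 f` and a message of size `M1` (`M2`), gives `H(X|W) ≤ log M1 / n` and `H(Y|W) ≤ log M2 / n`
(`cond_rate`), while `H(X,Y|W) = H(f | enc0 f) / n ≥ (log |D| - log M0) / n`. Since `Rgw_le` allows
auxiliary variables on any finite alphabet (its size is cut down to `|𝒳||𝒴| + 2` by the Carathéodory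
argument `carath`), this yields `R(r1, r2|Q) ≤ H(Q) - log |D| / n + log M0 / n` (`rate_bound`).

When `R` exceeds `r_{0,n}` at `Q`, this forces `|D| < 2 ^ (n H(Q)) (n + 1) ^ (-|𝒳||𝒴|) n⁻²`. Every word of
type `Q` has probability at most `2 ^ (-n H(Q))` (`prod_le`), and there are at most
`(n + 1) ^ (|𝒳||𝒴|)` types. Hence the event that the type is bad and decoding is correct has
probability at most `n⁻² ≤ 1 / n` (`good_mass`), and the remaining words of bad type are decoding
errors.

Entropies under the uniform distribution on a finite set are handled by counting: `LL` sums the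
logarithms of fibre sizes, and all inequalities between entropies come from `gibbs`.
-/


open Finset Filter MeasureTheory

attribute [local instance] Classical.propDecidable

open GW

namespace GWConv

noncomputable section

/-! ### Entropies of functions on a uniform finite sample space -/

/-- The size of the fibre of `a` through `f`, inside the sample space `D`. -/
def cnt {Ω α : Type*} (D : Finset Ω) (a : Ω → α) (f : Ω) : ℝ :=
  ((D.filter fun g => a g = a f).card : ℝ)

/-- Unnormalised log-fibre size of `a` on `D`. For the uniform distribution on `D`,
`H(a) = log |D| - LL D a / |D|` (see `ent_push`), so that the conditional entropy `H(b|a)` is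
`(LL D a - LL D (a, b)) / |D|`. -/
def LL {Ω α : Type*} (D : Finset Ω) (a : Ω → α) : ℝ :=
  ∑ f ∈ D, Real.logb 2 (cnt D a f)

lemma cnt_pos {Ω α : Type*} {D : Finset Ω} (a : Ω → α) {f : Ω} (hf : f ∈ D) :
    0 < cnt D a f := by
  unfold cnt
  exact_mod_cast Finset.card_pos.2 ⟨f, by simp [hf]⟩

lemma LL_congr {Ω α β : Type*} (D : Finset Ω) (a : Ω → α) (b : Ω → β)
    (h : ∀ f g, a f = a g ↔ b f = b g) : LL D a = LL D b := by
  unfold LL cnt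
  simp only [h]

lemma logb_le {x : ℝ} (hx : 0 < x) : Real.logb 2 x ≤ (x - 1) / Real.log 2 := by
  unfold Real.logb
  have := Real.log_le_sub_one_of_pos hx
  have h2 : 0 < Real.log 2 := Real.log_pos (by norm_num)
  gcongr

/-- Weighting each point of `S` by the inverse size of its `b`-fibre makes every value of `b`
count once. -/
lemma sum_div_fiber {Ω β : Type*} (S : Finset Ω) (b : Ω → β) (φ : β → ℝ) :
    ∑ f ∈ S, φ (b f) / ((S.filter fun g => b g = b f).card : ℝ) = ∑ x ∈ S.image b, φ x := by
  symm
  apply Finset.sum_image'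
  intro i hi
  have h : ∀ j ∈ S.filter (fun j => b j = b i),
      φ (b j) / ((S.filter fun g => b g = b j).card : ℝ)
        = φ (b i) / ((S.filter fun g => b g = b i).card : ℝ) := by
    intro j hj
    rw [(Finset.mem_filter.1 hj).2]
  rw [Finset.sum_congr rfl h, Finset.sum_const, nsmul_eq_mul]
  have : ((S.filter fun g => b g = b i).card : ℝ) ≠ 0 := (cnt_pos b hi).ne'
  field_simp

/-- The Gibbs inequality for the conditional law of `b` given `a` under the uniform distribution
on `D`: for any family `r f` of sub-probability weights depending on `f` only through `a f`,
`H(b|a) ≤ E[-log r(b)]`. -/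
lemma gibbs {Ω α β : Type*} (D : Finset Ω) (a : Ω → α) (b : Ω → β) (r : Ω → β → ℝ)
    (hr : ∀ f g, a f = a g → r f = r g) (hpos : ∀ f ∈ D, 0 < r f (b f))
    (hsum : ∀ g ∈ D, ∑ x ∈ (D.filter fun f => a f = a g).image b, r g x ≤ 1) :
    ∑ f ∈ D, Real.logb 2 (r f (b f)) + LL D a ≤ LL D (fun f => (a f, b f)) := by
  have h2 : 0 < Real.log 2 := Real.log_pos (by norm_num)
  have key : ∑ f ∈ D, r f (b f) * cnt D a f / cnt D (fun f => (a f, b f)) f ≤ D.card := by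
    calc ∑ f ∈ D, r f (b f) * cnt D a f / cnt D (fun f => (a f, b f)) f
        = ∑ f ∈ D, ∑ g ∈ D, if a f = a g then
            r f (b f) / cnt D (fun f => (a f, b f)) f else 0 := by
          refine Finset.sum_congr rfl fun f _ => ?_
          rw [← Finset.sum_filter, Finset.sum_const, nsmul_eq_mul]
          have : ((D.filter fun g => a f = a g).card : ℝ) = cnt D a f := by
            unfold cnt; simp only [eq_comm]
          rw [this]; ring
      _ = ∑ g ∈ D, ∑ f ∈ D, if a f = a g then
            r f (b f) / cnt D (fun f => (a f, b f)) f else 0 := Finset.sum_comm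
      _ = ∑ g ∈ D, ∑ x ∈ (D.filter fun f => a f = a g).image b, r g x := by
          refine Finset.sum_congr rfl fun g _ => ?_
          rw [← Finset.sum_filter, ← sum_div_fiber]
          refine Finset.sum_congr rfl fun f hf => ?_
          have hf' := (Finset.mem_filter.1 hf).2
          rw [hr f g hf', Finset.filter_filter]
          unfold cnt
          simp only [Prod.mk.injEq, hf']
      _ ≤ ∑ g ∈ D, 1 := Finset.sum_le_sum hsum
      _ = D.card := by simp
  have h : ∀ f ∈ D, Real.logb 2 (r f (b f)) + Real.logb 2 (cnt D a f)
      - Real.logb 2 (cnt D (fun f => (a f, b f)) f)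
      ≤ (r f (b f) * cnt D a f / cnt D (fun f => (a f, b f)) f - 1) / Real.log 2 := by
    intro f hf
    have h1 := hpos f hf
    have h3 := cnt_pos a hf
    have h4 := cnt_pos (fun f => (a f, b f)) hf
    rw [← Real.logb_mul h1.ne' h3.ne', ← Real.logb_div (by positivity) h4.ne']
    exact logb_le (by positivity)
  have h5 := Finset.sum_le_sum h
  rw [← Finset.sum_div, Finset.sum_sub_distrib, Finset.sum_sub_distrib,
    Finset.sum_add_distrib] at h5
  have h6 : (∑ f ∈ D, r f (b f) * cnt D a f / cnt D (fun f => (a f, b f)) f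
      - ∑ f ∈ D, (1 : ℝ)) / Real.log 2 ≤ 0 := by
    apply div_nonpos_of_nonpos_of_nonneg _ h2.le
    simp only [Finset.sum_const, nsmul_eq_mul, mul_one]
    linarith
  unfold LL
  linarith

/-- `H(b|a) ≤ log M` when `b` takes at most `M` values on each fibre of `a`. -/
lemma cond_le_log {Ω α β : Type*} (D : Finset Ω) (a : Ω → α) (b : Ω → β) {M : ℕ} (hM : 0 < M)
    (h : ∀ g ∈ D, ((D.filter fun f => a f = a g).image b).card ≤ M) :
    LL D a - LL D (fun f => (a f, b f)) ≤ D.card * Real.logb 2 M := by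
  have hM' : (0 : ℝ) < M := by exact_mod_cast hM
  have := gibbs D a b (fun _ _ => 1 / (M : ℝ)) (fun _ _ _ => rfl) (fun _ _ => by positivity)
    (fun g hg => by
      have : (((D.filter fun f => a f = a g).image b).card : ℝ) ≤ M := by exact_mod_cast h g hg
      rw [Finset.sum_const, nsmul_eq_mul, mul_one_div]
      exact (div_le_one hM').2 this)
  simp only [Finset.sum_const, nsmul_eq_mul, one_div, Real.logb_inv] at this
  linarith

/-- Conditioning on finer information reduces entropy: `H(b|c) ≤ H(b|a)` when `a` is a function
of `c`. This is `gibbs` for `c`, with `r` the conditional law of `b` given `a`. -/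
lemma cond_anti {Ω α β γ : Type*} (D : Finset Ω) (c : Ω → γ) (a : Ω → α) (b : Ω → β)
    (h : ∀ f g, c f = c g → a f = a g) :
    LL D c - LL D (fun f => (c f, b f)) ≤ LL D a - LL D (fun f => (a f, b f)) := by
  have := gibbs D c b
    (fun f x => ((D.filter fun g => a g = a f ∧ b g = x).card : ℝ) / cnt D a f)
    (fun f g hfg => by
      have := h f g hfg
      funext x
      simp only [cnt, this])
    (fun f hf => by
      have h1 := cnt_pos a hf
      have h2 : (0 : ℝ) < ((D.filter fun g => a g = a f ∧ b g = b f).card : ℝ) := by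
        exact_mod_cast Finset.card_pos.2 ⟨f, by simp [hf]⟩
      positivity)
    (fun g hg => by
      rw [← Finset.sum_div]
      apply (div_le_one (cnt_pos a hg)).2
      unfold cnt
      rw [← Nat.cast_sum]
      norm_cast
      simp only [← Finset.filter_filter]
      have h3 := Finset.sum_card_fiberwise_eq_card_filter (D.filter fun g' => a g' = a g)
        ((D.filter fun f => c f = c g).image b) b
      refine le_trans (le_of_eq ?_) (h3.le.trans (Finset.card_filter_le _ _))
      exact Finset.sum_congr rfl fun x _ => by congr)
  have h2 : ∑ f ∈ D, Real.logb 2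
      (((D.filter fun g => a g = a f ∧ b g = b f).card : ℝ) / cnt D a f)
      = LL D (fun f => (a f, b f)) - LL D a := by
    unfold LL
    rw [← Finset.sum_sub_distrib]
    refine Finset.sum_congr rfl fun f hf => ?_
    rw [← Real.logb_div (cnt_pos _ hf).ne' (cnt_pos _ hf).ne']
    simp only [cnt, Prod.mk.injEq]
  rw [h2] at this
  linarith

/-- The law of `u` under the uniform distribution on `E`. -/
def push {Ω γ : Type*} (E : Finset Ω) (u : Ω → γ) (c : γ) : ℝ :=
  ((E.filter fun e => u e = c).card : ℝ) / E.card

lemma ent_push {Ω γ : Type*} [Fintype γ] {E : Finset Ω} (hE : E.Nonempty) (u : Ω → γ) :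
    ent (push E u) = Real.logb 2 E.card - LL E u / E.card := by
  have hc : (E.card : ℝ) ≠ 0 := by exact_mod_cast hE.card_pos.ne'
  have h1 : ∀ c, push E u c * Real.logb 2 (push E u c)
      = ∑ e ∈ E.filter (fun e => u e = c),
        (Real.logb 2 (cnt E u e) - Real.logb 2 E.card) / E.card := by
    intro c
    have : ∀ e ∈ E.filter (fun e => u e = c),
        (Real.logb 2 (cnt E u e) - Real.logb 2 E.card) / E.card
          = Real.logb 2 (push E u c) / E.card := by
      intro e he
      obtain ⟨he1, he2⟩ := Finset.mem_filter.1 he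
      rw [← Real.logb_div (cnt_pos u he1).ne' hc]
      simp only [cnt, push, he2]
    rw [Finset.sum_congr rfl this, Finset.sum_const, nsmul_eq_mul]
    unfold push
    ring
  unfold ent
  simp only [h1]
  have h2 := Finset.sum_fiberwise E u
    (fun e => (Real.logb 2 (cnt E u e) - Real.logb 2 E.card) / E.card)
  rw [show ∑ x, ∑ e ∈ E.filter (fun e => u e = x),
      (Real.logb 2 (cnt E u e) - Real.logb 2 E.card) / E.card = _ from by convert h2,
    ← Finset.sum_div, Finset.sum_sub_distrib]
  unfold LL
  simp only [Finset.sum_const, nsmul_eq_mul]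
  field_simp
  ring

/-- The entropy functional extended to unnormalised `q` so as to be homogeneous of degree one:
`hf q` is the total mass of `q` times the entropy of its normalisation. If `q w t` is the joint law
of `(W, T)`, then `∑ w, hf (q w)` is the conditional entropy `H(T|W)` (see `sum_hf`). -/
def hf {T : Type*} [Fintype T] (q : T → ℝ) : ℝ :=
  ent q + (∑ t, q t) * Real.logb 2 (∑ t, q t)

lemma sum_hf {W T : Type*} [Fintype W] [Fintype T] (q : W → T → ℝ) :
    ∑ w, hf (q w) = ent (fun z : W × T => q z.1 z.2) - ent (fun w => ∑ t, q w t) := by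
  unfold hf ent
  rw [Finset.sum_add_distrib, Fintype.sum_prod_type, Finset.sum_neg_distrib]
  ring

lemma hf_smul {T : Type*} [Fintype T] (q : T → ℝ) (c : ℝ) :
    hf (fun t => c * q t) = c * hf q := by
  rcases eq_or_ne c 0 with rfl | hc
  · simp [hf, ent]
  have key : ∀ x : ℝ, (c * x) * Real.logb 2 (c * x)
      = c * (x * Real.logb 2 x) + c * Real.logb 2 c * x := by
    intro x
    rcases eq_or_ne x 0 with rfl | hx
    · simp
    rw [Real.logb_mul hc hx]; ring
  unfold hf ent
  simp only [key, ← Finset.mul_sum, Finset.sum_add_distrib]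
  ring

lemma sum_hf_push {Ω W T : Type*} [Fintype W] [Fintype T] {E : Finset Ω} (hE : E.Nonempty)
    (u : Ω → W) (v : Ω → T) :
    ∑ w, hf (fun t => push E (fun e => (u e, v e)) (w, t))
      = (LL E u - LL E (fun e => (u e, v e))) / E.card := by
  rw [sum_hf]
  have : (fun w => ∑ t, push E (fun e => (u e, v e)) (w, t)) = push E u := by
    funext w
    unfold push
    rw [← Finset.sum_div]
    congr 1
    rw [← Nat.cast_sum]
    norm_cast
    simp only [Prod.mk.injEq, ← Finset.filter_filter]
    rw [Finset.card_eq_sum_card_fiberwise (f := v) (t := Finset.univ) (by simp)]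
  rw [this]
  have h := ent_push hE (fun e => (u e, v e))
  rw [show (fun z : W × T => push E (fun e => (u e, v e)) (z.1, z.2))
    = push E (fun e => (u e, v e)) from rfl, h, ent_push hE u]
  ring

/-- Adjoining a uniform time index `i`: for the pair `(i, c i f)`, the log-fibre sizes add up
over the times. -/
lemma LL_time {Ω γ : Type*} {n : ℕ} (D : Finset Ω) (c : Fin n → Ω → γ) :
    LL ((Finset.univ : Finset (Fin n)) ×ˢ D) (fun e => (e.1, c e.1 e.2)) = ∑ i, LL D (c i) := by
  unfold LL
  rw [Finset.sum_product]
  refine Finset.sum_congr rfl fun i _ => Finset.sum_congr rfl fun f _ => ?_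
  congr 1
  unfold cnt
  norm_cast
  refine Finset.card_nbij' (fun e => e.2) (fun g => (i, g)) ?_ ?_ ?_ ?_
  · rintro ⟨j, g⟩ h
    simp only [Finset.coe_filter, Finset.mem_product, Finset.mem_univ, true_and, Prod.mk.injEq,
      Set.mem_ofPred_eq] at h ⊢
    obtain ⟨h1, rfl, h2⟩ := h
    exact ⟨h1, h2⟩
  · intro g h
    simpa using h
  · rintro ⟨j, g⟩ h
    simp only [Finset.coe_filter, Finset.mem_product, Finset.mem_univ, true_and, Prod.mk.injEq,
      Set.mem_ofPred_eq] at h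
    simp [h.2.1]
  · intro g h
    rfl

/-! ### Reducing the alphabet of the auxiliary variable -/

/-- Carathéodory reduction with an objective: a nonnegative combination of vectors `a w` can be
replaced by one with at most `dim E` nonzero coefficients, with the same value and without decreasing
the linear objective `∑ c w * g w`. The functional `l`, positive on the vectors in use, plays the role
of compactness: a nonzero linear dependency among them must have a negative coefficient. -/
lemma carath {ι E : Type*} [Fintype ι] [AddCommGroup E] [Module ℝ E] [FiniteDimensional ℝ E]
    (a : ι → E) (l : E →ₗ[ℝ] ℝ) (g : ι → ℝ) (m : ℕ) :
    ∀ c : ι → ℝ, (∀ w, 0 ≤ c w) → (∀ w, c w ≠ 0 → 0 < l (a w)) →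
      (Finset.univ.filter fun w => c w ≠ 0).card ≤ m →
      ∃ c' : ι → ℝ, (∀ w, 0 ≤ c' w) ∧ ∑ w, c' w • a w = ∑ w, c w • a w ∧
        ∑ w, c w * g w ≤ ∑ w, c' w * g w ∧
        (Finset.univ.filter fun w => c' w ≠ 0).card ≤ Module.finrank ℝ E := by
  induction m using Nat.strong_induction_on with
  | _ m ih =>
  intro c hc hl hm
  by_cases hle : (Finset.univ.filter fun w => c w ≠ 0).card ≤ Module.finrank ℝ E
  · exact ⟨c, hc, rfl, le_rfl, hle⟩
  push Not at hle
  have hdep : ¬ LinearIndependent ℝ (fun w : {w // c w ≠ 0} => a w) := by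
    intro h
    have := h.fintype_card_le_finrank
    rw [Fintype.card_subtype] at this
    exact absurd this (by convert not_le.2 hle)
  obtain ⟨v0, hv0, ⟨w1, hw1⟩⟩ := Fintype.not_linearIndependent_iff.1 hdep
  have hex : ∃ v : ι → ℝ, (∀ w, c w = 0 → v w = 0) ∧ ∑ w, v w • a w = 0 ∧ (∃ w, v w ≠ 0) := by
    refine ⟨fun w => if h : c w ≠ 0 then v0 ⟨w, h⟩ else 0, ?_, ?_, ⟨w1, ?_⟩⟩
    · intro w h; simp [h]
    · rw [← hv0]
      symm
      rw [← Finset.sum_subset (Finset.subset_univ (Finset.univ.filter fun w => c w ≠ 0))]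
      · symm
        rw [Finset.sum_subtype (p := fun w => c w ≠ 0) _ (by simp)]
        refine Finset.sum_congr rfl fun w _ => ?_
        simp [w.2]
      · intro w _ h
        simp only [Finset.mem_filter, Finset.mem_univ, true_and] at h
        simp [h]
    · simpa [w1.2] using hw1
  -- Replacing `v` by `-v` if needed, moving along `v` does not decrease the objective.
  have hex2 : ∃ v : ι → ℝ, (∀ w, c w = 0 → v w = 0) ∧ ∑ w, v w • a w = 0 ∧ (∃ w, v w ≠ 0) ∧
      0 ≤ ∑ w, v w * g w := by
    obtain ⟨v, h1, h2, ⟨w, h3⟩⟩ := hex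
    rcases le_total 0 (∑ w, v w * g w) with h | h
    · exact ⟨v, h1, h2, ⟨w, h3⟩, h⟩
    · refine ⟨fun w => - v w, fun w hw => by simp [h1 w hw], ?_, ⟨w, by simpa using h3⟩, ?_⟩
      · simp [neg_smul, h2]
      · simp only [neg_mul, Finset.sum_neg_distrib]; linarith
  obtain ⟨v, h1, h2, ⟨w2, h3⟩, h4⟩ := hex2
  have hneg : (Finset.univ.filter fun w => v w < 0).Nonempty := by
    by_contra hno
    rw [Finset.not_nonempty_iff_eq_empty, Finset.filter_eq_empty_iff] at hno
    have hv : ∀ w, 0 ≤ v w := fun w => not_lt.1 (hno (Finset.mem_univ w))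
    have hs : ∑ w, v w * l (a w) = 0 := by
      have := congrArg l h2
      simpa [map_sum] using this
    have hnn : ∀ w ∈ Finset.univ, 0 ≤ v w * l (a w) := by
      intro w _
      by_cases hw : c w = 0
      · simp [h1 w hw]
      · exact mul_nonneg (hv w) (hl w hw).le
    have := (Finset.sum_eq_zero_iff_of_nonneg hnn).1 hs w2 (Finset.mem_univ _)
    have hcw : c w2 ≠ 0 := fun h => h3 (h1 w2 h)
    rcases mul_eq_zero.1 this with h | h
    · exact h3 h
    · exact absurd h (ne_of_gt (hl w2 hcw))
  -- Move along the dependency `v` until a first coefficient vanishes.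
  obtain ⟨w0, hw0, hmin⟩ := Finset.exists_min_image _ (fun w => c w / (- v w)) hneg
  have hv0' : v w0 < 0 := (Finset.mem_filter.1 hw0).2
  set t := c w0 / (- v w0) with ht
  have ht0 : 0 ≤ t := div_nonneg (hc w0) (by linarith)
  have hzero : c w0 + t * v w0 = 0 := by
    rw [ht]; field_simp [hv0'.ne]; ring
  have hc0 : c w0 ≠ 0 := fun h => hv0'.ne (h1 w0 h)
  have hlt : (Finset.univ.filter fun w => c w + t * v w ≠ 0).card
      < (Finset.univ.filter fun w => c w ≠ 0).card := by
    apply Finset.card_lt_card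
    rw [Finset.ssubset_iff_of_subset]
    · exact ⟨w0, by simp [hc0], by simp [hzero]⟩
    · intro w
      simp only [Finset.mem_filter, Finset.mem_univ, true_and]
      intro h h'
      exact h (by simp [h', h1 w h'])
  obtain ⟨c', k1, k2, k3, k4⟩ := ih _ (lt_of_lt_of_le hlt hm) (fun w => c w + t * v w)
    (fun w => by
      by_cases hw : v w < 0
      · have := hmin w (by simp [hw])
        rw [le_div_iff₀ (by linarith)] at this
        linarith
      · exact add_nonneg (hc w) (mul_nonneg ht0 (not_lt.1 hw)))
    (fun w hw => hl w (fun h => hw (by simp [h, h1 w h]))) le_rfl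
  refine ⟨c', k1, ?_, ?_, k4⟩
  · rw [k2]
    simp only [add_smul, Finset.sum_add_distrib, mul_smul, ← Finset.smul_sum, h2, smul_zero,
      add_zero]
  · refine le_trans ?_ k3
    simp only [add_mul, Finset.sum_add_distrib, mul_assoc, ← Finset.mul_sum]
    nlinarith

/-- A joint law with first marginal `p` comes from a channel; where `p` vanishes, the channel is a
point mass. -/
lemma exists_channel {Z W : Type*} [Fintype Z] [Fintype W] [Nonempty W] (p : Z → ℝ)
    (hp : IsProb p) (q : W → Z → ℝ) (hq : ∀ w z, 0 ≤ q w z) (hs : ∀ z, ∑ w, q w z = p z) :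
    ∃ K : Z → W → ℝ, IsChannel K ∧ ∀ z w, p z * K z w = q w z := by
  obtain ⟨w0⟩ := ‹Nonempty W›
  refine ⟨fun z w => if p z = 0 then (if w = w0 then 1 else 0) else q w z / p z, ?_, ?_⟩
  · intro z
    by_cases h : p z = 0
    · simp only [h, if_true]
      exact ⟨fun w => by dsimp only; split_ifs <;> norm_num, by simp⟩
    · simp only [h, if_false]
      refine ⟨fun w => div_nonneg (hq w z) (hp.1 z), ?_⟩
      rw [← Finset.sum_div, hs, div_self h]
  · intro z w
    by_cases h : p z = 0
    · have := hs z
      rw [h, Finset.sum_eq_zero_iff_of_nonneg (fun w _ => hq w z)] at this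
      simp [h, this w (Finset.mem_univ _)]
    · simp only [h, if_false]
      field_simp

variable {𝒳 𝒴 W : Type*} [Fintype 𝒳] [Fintype 𝒴] [Fintype W]

/-- The `𝒳`-marginal of an unnormalised law on `𝒳 × 𝒴`. -/
def mX (q : 𝒳 × 𝒴 → ℝ) : 𝒳 → ℝ := fun x => ∑ y, q (x, y)

/-- The `𝒴`-marginal of an unnormalised law on `𝒳 × 𝒴`. -/
def mY (q : 𝒳 × 𝒴 → ℝ) : 𝒴 → ℝ := fun y => ∑ x, q (x, y)

lemma condEntX_eq (p : 𝒳 × 𝒴 → ℝ) (K : 𝒳 × 𝒴 → W → ℝ) (q : W → 𝒳 × 𝒴 → ℝ)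
    (h : ∀ z w, p z * K z w = q w z) : condEntX p K = ∑ w, hf (mX (q w)) := by
  rw [sum_hf]
  unfold condEntX margWX outW mX
  simp only [h, Fintype.sum_prod_type]

lemma condEntY_eq (p : 𝒳 × 𝒴 → ℝ) (K : 𝒳 × 𝒴 → W → ℝ) (q : W → 𝒳 × 𝒴 → ℝ)
    (h : ∀ z w, p z * K z w = q w z) : condEntY p K = ∑ w, hf (mY (q w)) := by
  rw [sum_hf]
  unfold condEntY margWY outW mY
  simp only [h, Fintype.sum_prod_type_right]

lemma mutInfoW_eq (p : 𝒳 × 𝒴 → ℝ) (K : 𝒳 × 𝒴 → W → ℝ) (q : W → 𝒳 × 𝒴 → ℝ)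
    (h : ∀ z w, p z * K z w = q w z) : mutInfoW p K = ent p - ∑ w, hf (q w) := by
  rw [sum_hf]
  unfold mutInfoW outW jointW
  simp only [h]
  ring

lemma hf_le {T : Type*} [Fintype T] (q : T → ℝ) (hq : ∀ t, 0 ≤ q t) :
    hf q ≤ Fintype.card T / Real.log 2 * ∑ t, q t := by
  have h2 : 0 < Real.log 2 := Real.log_pos (by norm_num)
  set s := ∑ t, q t with hs
  have hs0 : 0 ≤ s := Finset.sum_nonneg fun t _ => hq t
  have h : ∀ t ∈ Finset.univ, -(q t * Real.logb 2 (q t)) + q t * Real.logb 2 s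
      ≤ s / Real.log 2 := by
    intro t _
    rcases (hq t).eq_or_lt with h0 | h0
    · rw [← h0]; simp only [zero_mul]; simp; positivity
    · have hts : q t ≤ s := Finset.single_le_sum (fun t _ => hq t) (Finset.mem_univ t)
      have h3 := logb_le (x := s / q t) (by have := h0.trans_le hts; positivity)
      rw [Real.logb_div (h0.trans_le hts).ne' h0.ne'] at h3
      have h4 := mul_le_mul_of_nonneg_left h3 h0.le
      have h5 : q t * ((s / q t - 1) / Real.log 2) = (s - q t) / Real.log 2 := by
        field_simp
      have h6 : (s - q t) / Real.log 2 ≤ s / Real.log 2 := by gcongr; linarith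
      linarith
  have h3 := Finset.sum_le_sum h
  rw [Finset.sum_add_distrib, Finset.sum_neg_distrib, ← Finset.sum_mul, Finset.sum_const,
    nsmul_eq_mul, Finset.card_univ, ← hs] at h3
  unfold hf ent
  rw [← hs]
  calc _ ≤ _ := h3
    _ = _ := by ring

/-- The set whose infimum is `Rgw` is bounded below; without this, `sInf` would take the junk
value `0`. -/
lemma bddBelow_rate (p : 𝒳 × 𝒴 → ℝ) (hp : IsProb p) (r1 r2 : ℝ) :
    BddBelow { ρ : ℝ | ∃ k, k ≤ Fintype.card 𝒳 * Fintype.card 𝒴 + 2 ∧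
    ∃ K : 𝒳 × 𝒴 → Fin k → ℝ, IsChannel K ∧
      condEntX p K ≤ r1 ∧ condEntY p K ≤ r2 ∧ ρ = mutInfoW p K } := by
  refine ⟨ent p - Fintype.card (𝒳 × 𝒴) / Real.log 2, ?_⟩
  rintro _ ⟨k, -, K, hK, -, -, rfl⟩
  rw [mutInfoW_eq p K (fun w z => p z * K z w) (fun _ _ => rfl)]
  have h := Finset.sum_le_sum fun (w : Fin k) (_ : w ∈ Finset.univ) =>
    hf_le (fun z => p z * K z w) (fun z => mul_nonneg (hp.1 z) ((hK z).1 w))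
  rw [← Finset.mul_sum, Finset.sum_comm] at h
  simp only [← Finset.mul_sum, (hK _).2, mul_one, hp.2] at h
  linarith

lemma hf_zero {T : Type*} [Fintype T] : hf (0 : T → ℝ) = 0 := by
  simp [hf, ent]

/-- `R(r1, r2|p) ≤ I(W ∧ X,Y)` for every joint law `q` of `(W, X, Y)` with `(X, Y) ∼ p`,
`H(X|W) ≤ r1` and `H(Y|W) ≤ r2`, whatever the size of the alphabet of `W`. Here `carath` is applied
to the vectors `(q w, hf (mX (q w)), hf (mY (q w)))`, which live in dimension `|𝒳||𝒴| + 2`, with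
objective `H(X,Y|W)`. -/
lemma Rgw_le (p : 𝒳 × 𝒴 → ℝ) (hp : IsProb p) (r1 r2 : ℝ) (q : W → 𝒳 × 𝒴 → ℝ)
    (hq : ∀ w z, 0 ≤ q w z) (hs : ∀ z, ∑ w, q w z = p z)
    (h1 : ∑ w, hf (mX (q w)) ≤ r1) (h2 : ∑ w, hf (mY (q w)) ≤ r2) :
    Rgw p r1 r2 ≤ ent p - ∑ w, hf (q w) := by
  let a : W → (𝒳 × 𝒴 → ℝ) × ℝ × ℝ := fun w => (q w, hf (mX (q w)), hf (mY (q w)))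
  let l : ((𝒳 × 𝒴 → ℝ) × ℝ × ℝ) →ₗ[ℝ] ℝ :=
    (∑ z : 𝒳 × 𝒴, LinearMap.proj z) ∘ₗ LinearMap.fst ℝ _ _
  have hl : ∀ w, l (a w) = ∑ z, q w z := by
    intro w
    simp [l, a]
  -- Symbols `w` of probability zero are dropped first, as `carath` needs `l (a w) > 0`.
  let c : W → ℝ := fun w => if ∑ z, q w z = 0 then 0 else 1
  have hz : ∀ w, ∑ z, q w z = 0 → q w = 0 := by
    intro w h
    rw [Finset.sum_eq_zero_iff_of_nonneg (fun z _ => hq w z)] at h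
    funext z
    exact h z (Finset.mem_univ z)
  have ha : ∀ w, c w • a w = a w := by
    intro w
    by_cases h : ∑ z, q w z = 0
    · have h' := hz w h
      have hX : mX (q w) = 0 := by rw [h']; funext x; simp [mX]
      have hY : mY (q w) = 0 := by rw [h']; funext x; simp [mY]
      have h0 : a w = 0 := by
        simp only [a]
        rw [hX, hY, hf_zero, hf_zero, h']
        rfl
      rw [h0, smul_zero]
    · simp [c, h]
  have hg : ∀ w, c w * hf (q w) = hf (q w) := by
    intro w
    by_cases h : ∑ z, q w z = 0
    · simp [hz w h, hf_zero]
    · simp [c, h]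
  obtain ⟨c', k1, k2, k3, k4⟩ := carath a l (fun w => hf (q w)) _ c
    (fun w => by simp only [c]; split_ifs <;> norm_num)
    (fun w hw => by
      rw [hl]
      have : ∑ z, q w z ≠ 0 := fun h => hw (by simp [c, h])
      exact lt_of_le_of_ne (Finset.sum_nonneg fun z _ => hq w z) this.symm) le_rfl
  simp only [ha, hg] at k2 k3
  set S := Finset.univ.filter fun w => c' w ≠ 0 with hS
  have hfin : Module.finrank ℝ ((𝒳 × 𝒴 → ℝ) × ℝ × ℝ)
      = Fintype.card 𝒳 * Fintype.card 𝒴 + 2 := by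
    simp [Module.finrank_prod]
  rw [hfin] at k4
  have tr : ∀ F : W → ℝ, ∑ j : Fin S.card, c' (S.equivFin.symm j) * F (S.equivFin.symm j)
      = ∑ w, c' w * F w := by
    intro F
    rw [Equiv.sum_comp S.equivFin.symm (fun w : S => c' w * F w),
      Finset.sum_coe_sort S (fun w => c' w * F w)]
    apply Finset.sum_subset (Finset.subset_univ _)
    intro w _ hw
    have : c' w = 0 := by simpa [hS] using hw
    simp [this]
  have e1 : ∀ z, ∑ w, c' w * q w z = p z := by
    intro z
    have := congrArg (fun v => v.1 z) k2
    simpa [a, Prod.fst_sum, hs] using this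
  have e2 : ∑ w, c' w * hf (mX (q w)) = ∑ w, hf (mX (q w)) := by
    have := congrArg (fun v => v.2.1) k2
    simpa [a, Prod.fst_sum, Prod.snd_sum] using this
  have e3 : ∑ w, c' w * hf (mY (q w)) = ∑ w, hf (mY (q w)) := by
    have := congrArg (fun v => v.2.2) k2
    simpa [a, Prod.fst_sum, Prod.snd_sum] using this
  have hne : Nonempty (Fin S.card) := by
    by_contra hno
    rw [not_nonempty_iff] at hno
    have h0 : ∀ z, p z = 0 := by
      intro z
      rw [← e1 z, ← tr (fun w => q w z)]
      simp
    have := hp.2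
    simp [h0] at this
  let q' : Fin S.card → 𝒳 × 𝒴 → ℝ := fun j z => c' (S.equivFin.symm j) * q (S.equivFin.symm j) z
  have mXs : ∀ j, hf (mX (q' j)) = c' (S.equivFin.symm j) * hf (mX (q (S.equivFin.symm j))) := by
    intro j
    rw [← hf_smul]
    congr 1
    funext x
    simp only [mX, q', Finset.mul_sum]
  have mYs : ∀ j, hf (mY (q' j)) = c' (S.equivFin.symm j) * hf (mY (q (S.equivFin.symm j))) := by
    intro j
    rw [← hf_smul]
    congr 1
    funext x
    simp only [mY, q', Finset.mul_sum]
  obtain ⟨K, hK, hKq⟩ := exists_channel p hp q' (fun j z => mul_nonneg (k1 _) (hq _ _))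
    (fun z => by rw [← e1 z, ← tr (fun w => q w z)])
  have hmem : mutInfoW p K ≤ ent p - ∑ w, hf (q w) := by
    rw [mutInfoW_eq p K q' hKq]
    have : ∑ j, hf (q' j) = ∑ w, c' w * hf (q w) := by
      rw [← tr]
      exact Finset.sum_congr rfl fun j _ => hf_smul _ _
    linarith
  refine le_trans (csInf_le (bddBelow_rate p hp r1 r2) ⟨S.card, k4, K, hK, ?_, ?_, rfl⟩) hmem
  · rw [condEntX_eq p K q' hKq]
    simp only [mXs]
    rw [tr (fun w => hf (mX (q w))), e2]
    exact h1
  · rw [condEntY_eq p K q' hKq]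
    simp only [mYs]
    rw [tr (fun w => hf (mY (q w))), e3]
    exact h2

/-! ### Single-letterisation -/

/-- The first `m` letters of `pr ∘ f`, encoded as a sequence of fixed length in which the remaining
letters are replaced by `none`. -/
def pre {Z T : Type*} {n : ℕ} (pr : Z → T) (m : ℕ) (f : Fin n → Z) : Fin n → Option T :=
  fun j => if j.val < m then some (pr (f j)) else none

lemma pre_eq_iff {Z T : Type*} {n : ℕ} (pr : Z → T) (m : ℕ) (f g : Fin n → Z) :
    pre pr m f = pre pr m g ↔ ∀ j : Fin n, j.val < m → pr (f j) = pr (g j) := by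
  constructor
  · intro h j hj
    have := congrFun h j
    simpa [pre, hj] using this
  · intro h
    funext j
    by_cases hj : j.val < m
    · simp [pre, hj, h j hj]
    · simp [pre, hj]

/-- Chain rule: the entropies of the letters `pr (f i)` given `e` and the preceding letters add
up to the entropy of the whole word `pr ∘ f` given `e`. -/
lemma telescope {Z T α : Type*} {n : ℕ} (D : Finset (Fin n → Z)) (e : (Fin n → Z) → α)
    (pr : Z → T) :
    ∑ i : Fin n, (LL D (fun f => (e f, pre pr i f))
        - LL D (fun f => ((e f, pre pr i f), pr (f i))))
      = LL D e - LL D (fun f => (e f, fun j => pr (f j))) := by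
  have h : ∀ i : Fin n, LL D (fun f => ((e f, pre pr i f), pr (f i)))
      = LL D (fun f => (e f, pre pr (i.val + 1) f)) := by
    intro i
    apply LL_congr
    intro f g
    simp only [Prod.mk.injEq, pre_eq_iff, Nat.lt_succ_iff_lt_or_eq, and_assoc]
    constructor
    · rintro ⟨h1, h2, h3⟩
      refine ⟨h1, fun j hj => ?_⟩
      rcases hj with hj | hj
      · exact h2 j hj
      · rw [Fin.ext hj]; exact h3
    · rintro ⟨h1, h2⟩
      exact ⟨h1, fun j hj => h2 j (Or.inl hj), h2 i (Or.inr rfl)⟩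
  simp only [h]
  rw [Fin.sum_univ_eq_sum_range (fun i => LL D (fun f => (e f, pre pr i f))
        - LL D (fun f => (e f, pre pr (i + 1) f))) n, Finset.sum_range_sub']
  congr 1
  · apply LL_congr
    intro f g
    simp [pre_eq_iff]
  · apply LL_congr
    intro f g
    simp only [Prod.mk.injEq, pre_eq_iff]
    simp [funext_iff]

/-- `H(b|a) ≤ log M` when `b` can be decoded from `a` and a message in `Fin M`. -/
lemma cond_le_log_of_decodable {Ω α β : Type*} (D : Finset Ω) (a : Ω → α) (b : Ω → β) {M : ℕ}
    (hM : 0 < M) (h : ∀ g ∈ D, ∃ φ : Fin M → β, ∀ f ∈ D, a f = a g → ∃ m, φ m = b f) :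
    LL D a - LL D (fun f => (a f, b f)) ≤ D.card * Real.logb 2 M := by
  refine cond_le_log D a b hM fun g hg => ?_
  obtain ⟨φ, hφ⟩ := h g hg
  have hcard : ((Finset.univ : Finset (Fin M)).image φ).card ≤ M :=
    Finset.card_image_le.trans (by simp)
  refine le_trans (Finset.card_le_card ?_) hcard
  intro x hx
  obtain ⟨f, hf, rfl⟩ := Finset.mem_image.1 hx
  obtain ⟨h1, h2⟩ := Finset.mem_filter.1 hf
  obtain ⟨m, hm⟩ := hφ f h1 h2
  exact Finset.mem_image.2 ⟨m, Finset.mem_univ _, hm⟩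

lemma LL_eq_zero_of_inj {Ω α : Type*} (D : Finset Ω) (a : Ω → α)
    (h : ∀ f g, a g = a f → g = f) : LL D a = 0 := by
  refine Finset.sum_eq_zero fun f hf => ?_
  have : D.filter (fun g => a g = a f) = {f} := by
    ext g
    simp only [Finset.mem_filter, Finset.mem_singleton]
    constructor
    · rintro ⟨_, h'⟩; exact h f g h'
    · rintro rfl; exact ⟨hf, rfl⟩
  simp [cnt, this]

/-- If `e` and `e1` determine the word `pr ∘ f` on `D`, then the entropies of its letters given
`e` and the past of the full word `f` add up to at most `log M1`. -/
lemma cond_rate {Z T : Type*} {n M0 M1 : ℕ} (D : Finset (Fin n → Z))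
    (e : (Fin n → Z) → Fin M0) (e1 : (Fin n → Z) → Fin M1) (dec : Fin M0 × Fin M1 → Fin n → T)
    (pr : Z → T) (hM : 0 < M1) (hdec : ∀ f ∈ D, ∀ j, dec (e f, e1 f) j = pr (f j)) :
    ∑ i : Fin n, (LL D (fun f => (e f, pre id i f))
        - LL D (fun f => ((e f, pre id i f), pr (f i)))) ≤ D.card * Real.logb 2 M1 := by
  calc _ ≤ ∑ i : Fin n, (LL D (fun f => (e f, pre pr i f))
        - LL D (fun f => ((e f, pre pr i f), pr (f i)))) := by
        refine Finset.sum_le_sum fun i _ => cond_anti D _ _ _ fun f g h => ?_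
        simp only [Prod.mk.injEq, pre_eq_iff] at h ⊢
        exact ⟨h.1, fun j hj => congrArg pr (h.2 j hj)⟩
    _ = LL D e - LL D (fun f => (e f, fun j => pr (f j))) := telescope D e pr
    _ ≤ _ := by
        refine cond_le_log_of_decodable D e _ hM fun g _ =>
          ⟨fun m => dec (e g, m), fun f hf h => ⟨e1 f, ?_⟩⟩
        funext j
        rw [← h]
        exact hdec f hf j

lemma push_sum {Ω T : Type*} [Fintype T] (E : Finset Ω) (P : Ω → Prop) (v : Ω → T) :
    ∑ t, ((E.filter fun e => P e ∧ v e = t).card : ℝ) / E.card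
      = ((E.filter P).card : ℝ) / E.card := by
  rw [← Finset.sum_div, ← Nat.cast_sum]
  congr 2
  have h := Finset.card_eq_sum_card_fiberwise (f := v) (s := E.filter P) (t := Finset.univ)
    (by simp)
  rw [h]
  refine Finset.sum_congr rfl fun t _ => ?_
  rw [Finset.filter_filter]

lemma push_sum_left {Ω W T : Type*} [Fintype W] (E : Finset Ω) (u : Ω → W) (v : Ω → T) (t : T) :
    ∑ w, push E (fun e => (u e, v e)) (w, t) = push E v t := by
  unfold push
  rw [← push_sum E (fun e => v e = t) u]
  refine Finset.sum_congr rfl fun w _ => ?_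
  simp only [Prod.mk.injEq, and_comm]

lemma push_sum_snd {Ω W S T : Type*} [Fintype T] (E : Finset Ω) (u : Ω → W) (s : Ω → S)
    (v : Ω → T) (w : W) (x : S) :
    ∑ y, push E (fun e => (u e, (s e, v e))) (w, (x, y)) = push E (fun e => (u e, s e)) (w, x) := by
  unfold push
  rw [← push_sum E (fun e => (u e, s e) = (w, x)) v]
  refine Finset.sum_congr rfl fun y _ => ?_
  simp only [Prod.mk.injEq, and_assoc]

lemma push_sum_fst {Ω W S T : Type*} [Fintype S] (E : Finset Ω) (u : Ω → W) (s : Ω → S)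
    (v : Ω → T) (w : W) (y : T) :
    ∑ x, push E (fun e => (u e, (s e, v e))) (w, (x, y)) = push E (fun e => (u e, v e)) (w, y) := by
  unfold push
  rw [← push_sum E (fun e => (u e, v e) = (w, y)) s]
  refine Finset.sum_congr rfl fun x _ => ?_
  simp only [Prod.mk.injEq, and_assoc, and_comm (a := s _ = x)]

/-- If all words in `D` have type `Q`, a letter of a uniform word of `D` at a uniform time has
law `Q`. -/
lemma push_time {Z : Type*} [Fintype Z] {n : ℕ} (hn : 0 < n) (D : Finset (Fin n → Z))
    (hD : D.Nonempty) (Q : Z → ℝ) (hQ : ∀ f ∈ D, empDist f = Q) (z : Z) :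
    push ((Finset.univ : Finset (Fin n)) ×ˢ D) (fun e => e.2 e.1) z = Q z := by
  have hn' : (0 : ℝ) < n := by exact_mod_cast hn
  have hDc : (0 : ℝ) < D.card := by exact_mod_cast hD.card_pos
  have e2 : ((((Finset.univ : Finset (Fin n)) ×ˢ D).filter fun e => e.2 e.1 = z).card : ℝ)
      = ∑ f ∈ D, n * Q z := by
    rw [Finset.card_filter, Finset.sum_product_right]
    push_cast
    refine Finset.sum_congr rfl fun f hf => ?_
    rw [← hQ f hf, empDist, mul_div_cancel₀ _ hn'.ne', Finset.card_filter]
    push_cast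
    rfl
  unfold push
  rw [e2, Finset.card_product, Finset.sum_const, nsmul_eq_mul, Finset.card_univ, Fintype.card_fin]
  push_cast
  field_simp

/-- The conditional entropy of the letter at a uniform time given `(i, c i f)`, times `n |D|`, is
the sum over the times of the unnormalised conditional entropies. -/
lemma LL_time_cond {γ T Z : Type*} {n : ℕ} (D : Finset (Fin n → Z))
    (c : Fin n → (Fin n → Z) → γ) (pr : Z → T) :
    LL ((Finset.univ : Finset (Fin n)) ×ˢ D) (fun e => (e.1, c e.1 e.2))
      - LL ((Finset.univ : Finset (Fin n)) ×ˢ D) (fun e => ((e.1, c e.1 e.2), pr (e.2 e.1)))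
      = ∑ i : Fin n, (LL D (c i) - LL D (fun f => (c i f, pr (f i)))) := by
  rw [Finset.sum_sub_distrib, ← LL_time D c, ← LL_time D (fun i f => (c i f, pr (f i)))]
  congr 1
  apply LL_congr
  intro f g
  simp only [Prod.mk.injEq, and_assoc]

/-- The single-letter bound for a set `D` of correctly decoded words of a common type `Q`. The
auxiliary variable is `W = (i, enc0 f, f_{<i})` for a uniform `f ∈ D` and an independent uniform time
`i`; it satisfies `H(X|W) ≤ log M1 / n`, `H(Y|W) ≤ log M2 / n` and
`H(X,Y|W) = H(f | enc0 f) / n ≥ (log |D| - log M0) / n`. -/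
lemma rate_bound {n M0 M1 M2 : ℕ} (hn : 0 < n) (C : GWCode 𝒳 𝒴 n M0 M1 M2)
    (D : Finset (Fin n → 𝒳 × 𝒴)) (hD : D.Nonempty) (hC : ∀ f ∈ D, C.correct f)
    (Q : 𝒳 × 𝒴 → ℝ) (hQp : IsProb Q) (hQ : ∀ f ∈ D, empDist f = Q) (r1 r2 : ℝ)
    (h1 : Real.logb 2 M1 / n ≤ r1) (h2 : Real.logb 2 M2 / n ≤ r2) :
    Rgw Q r1 r2 ≤ ent Q - Real.logb 2 D.card / n + Real.logb 2 M0 / n := by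
  obtain ⟨f0, hf0⟩ := hD
  have hM0 : 0 < M0 := (C.enc0 f0).pos
  have hM1 : 0 < M1 := (C.enc1 f0).pos
  have hM2 : 0 < M2 := (C.enc2 f0).pos
  have hn' : (0 : ℝ) < n := by exact_mod_cast hn
  have hDc : (0 : ℝ) < D.card := by exact_mod_cast Finset.card_pos.2 ⟨f0, hf0⟩
  set E : Finset (Fin n × (Fin n → 𝒳 × 𝒴)) := Finset.univ ×ˢ D with hE
  have hEne : E.Nonempty := ⟨(⟨0, hn⟩, f0), by simp [hE, hf0]⟩
  have hEc : (E.card : ℝ) = n * D.card := by simp [hE]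
  let c : Fin n → (Fin n → 𝒳 × 𝒴) → Fin M0 × (Fin n → Option (𝒳 × 𝒴)) :=
    fun i f => (C.enc0 f, pre id i f)
  let key : Fin n × (Fin n → 𝒳 × 𝒴) → Fin n × (Fin M0 × (Fin n → Option (𝒳 × 𝒴))) :=
    fun e => (e.1, c e.1 e.2)
  let q : Fin n × (Fin M0 × (Fin n → Option (𝒳 × 𝒴))) → 𝒳 × 𝒴 → ℝ :=
    fun w z => push E (fun e => (key e, e.2 e.1)) (w, z)
  have hcs : ∀ z, ∑ w, q w z = Q z := by
    intro z
    rw [← push_time hn D ⟨f0, hf0⟩ Q hQ z]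
    exact push_sum_left E key (fun e => e.2 e.1) z
  have hmX : ∀ w, mX (q w) = fun x => push E (fun e => (key e, (e.2 e.1).1)) (w, x) := by
    intro w
    funext x
    exact push_sum_snd E key (fun e => (e.2 e.1).1) (fun e => (e.2 e.1).2) w x
  have hmY : ∀ w, mY (q w) = fun y => push E (fun e => (key e, (e.2 e.1).2)) (w, y) := by
    intro w
    funext y
    exact push_sum_fst E key (fun e => (e.2 e.1).1) (fun e => (e.2 e.1).2) w y
  have hX := cond_rate D C.enc0 C.enc1 C.dec1 Prod.fst hM1 (fun f hf j => (hC f hf j).1)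
  have hY := cond_rate D C.enc0 C.enc2 C.dec2 Prod.snd hM2 (fun f hf j => (hC f hf j).2)
  have hsum := telescope D C.enc0 (id : 𝒳 × 𝒴 → 𝒳 × 𝒴)
  -- The whole word determines itself, so no uncertainty is left at the end of the chain rule.
  have hlast : LL D (fun f => (C.enc0 f, fun j => id (f j))) = 0 :=
    LL_eq_zero_of_inj D _ fun f g h => (Prod.ext_iff.1 h).2
  have hW : D.card * Real.logb 2 D.card - LL D C.enc0 ≤ D.card * Real.logb 2 M0 := by
    have := cond_le_log_of_decodable D (fun _ => ()) C.enc0 hM0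
      (fun _ _ => ⟨id, fun f _ _ => ⟨C.enc0 f, rfl⟩⟩)
    have e1 : LL D (fun _ => ()) = D.card * Real.logb 2 D.card := by
      simp [LL, cnt]
    have e2 : LL D (fun f => ((), C.enc0 f)) = LL D C.enc0 := by
      apply LL_congr; simp
    rw [e1, e2] at this
    exact this
  have hmain := Rgw_le Q hQp r1 r2 q
    (fun w z => by simp only [q, push]; positivity) hcs
    (by
      simp only [hmX]
      rw [sum_hf_push hEne key (fun e => (e.2 e.1).1), LL_time_cond D c Prod.fst, hEc]
      refine le_trans ?_ h1
      rw [div_le_div_iff₀ (by positivity) hn']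
      nlinarith)
    (by
      simp only [hmY]
      rw [sum_hf_push hEne key (fun e => (e.2 e.1).2), LL_time_cond D c Prod.snd, hEc]
      refine le_trans ?_ h2
      rw [div_le_div_iff₀ (by positivity) hn']
      nlinarith)
  refine hmain.trans ?_
  rw [show ∑ w, hf (q w) = _ from sum_hf_push hEne key (fun e => e.2 e.1)]
  have h3 := LL_time_cond D c (id : 𝒳 × 𝒴 → 𝒳 × 𝒴)
  rw [hsum, hlast] at h3
  simp only [id] at h3
  rw [h3, hEc]
  have h4 : (Real.logb 2 D.card - Real.logb 2 M0) / n ≤ (LL D C.enc0 - 0) / (n * D.card) := by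
    rw [div_le_div_iff₀ hn' (by positivity)]
    nlinarith
  rw [sub_div] at h4
  linarith

/-! ### Summing over types -/

lemma empDist_prob {Z : Type*} [Fintype Z] {n : ℕ} (hn : 0 < n) (f : Fin n → Z) :
    IsProb (empDist f) := by
  have hn' : (0 : ℝ) < n := by exact_mod_cast hn
  refine ⟨fun z => by unfold empDist; positivity, ?_⟩
  have h := push_sum (Finset.univ : Finset (Fin n)) (fun _ => True) f
  simp only [true_and, Finset.card_univ, Fintype.card_fin, Finset.filter_true] at h
  unfold empDist
  rw [h, div_self hn'.ne']

/-- A word has probability at most `2 ^ (-n H(Q))`, with `Q` its type, under any product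
distribution, because its type is the distribution maximising its likelihood. -/
lemma prod_le {Z : Type*} [Fintype Z] {n : ℕ} (hn : 0 < n) (p : Z → ℝ) (hp : IsProb p)
    (f : Fin n → Z) : ∏ i, p (f i) ≤ (2 : ℝ) ^ (-(n * ent (empDist f))) := by
  have hn' : (0 : ℝ) < n := by exact_mod_cast hn
  have : Nonempty (Fin n) := ⟨⟨0, hn⟩⟩
  set Q := empDist f with hQdef
  have hQ : ∀ i, 0 < Q (f i) := by
    intro i
    have : 0 < ((Finset.univ.filter fun j => f j = f i).card : ℝ) := by
      exact_mod_cast Finset.card_pos.2 ⟨i, by simp⟩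
    simp only [hQdef, empDist]
    positivity
  have he : (2 : ℝ) ^ (-(n * ent Q)) = ∏ i, Q (f i) := by
    have h1 := ent_push (Finset.univ_nonempty (α := Fin n)) f
    have h2 : push Finset.univ f = Q := by
      funext z; simp [push, hQdef, empDist]
    rw [h2] at h1
    have h3 : -(n * ent Q) = ∑ i, Real.logb 2 (Q (f i)) := by
      rw [h1]
      simp only [Finset.card_univ, Fintype.card_fin, LL]
      have : ∀ i, Real.logb 2 (Q (f i)) = Real.logb 2 (cnt Finset.univ f i) - Real.logb 2 n := by
        intro i
        rw [← Real.logb_div (cnt_pos f (Finset.mem_univ i)).ne' hn'.ne']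
        rfl
      simp only [this, Finset.sum_sub_distrib, Finset.sum_const, Finset.card_univ,
        Fintype.card_fin, nsmul_eq_mul]
      field_simp
      ring
    rw [h3, Real.rpow_sum_of_pos (by norm_num)]
    exact Finset.prod_congr rfl fun i _ =>
      Real.rpow_logb (by norm_num) (by norm_num) (hQ i)
  rw [he]
  have h1 : ∑ i, p (f i) / Q (f i) ≤ n := by
    have h2 := sum_div_fiber (Finset.univ : Finset (Fin n)) f (fun z => n * p z)
    have h3 : ∑ i, p (f i) / Q (f i) = ∑ x ∈ Finset.univ.image f, n * p x := by
      rw [← h2]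
      refine Finset.sum_congr rfl fun i _ => ?_
      simp only [hQdef, empDist]
      field_simp
    rw [h3, ← Finset.mul_sum]
    have h4 : ∑ x ∈ Finset.univ.image f, p x ≤ 1 := by
      rw [← hp.2]
      exact Finset.sum_le_sum_of_subset_of_nonneg (Finset.subset_univ _) fun z _ _ => hp.1 z
    nlinarith
  -- With `x ≤ exp (x - 1)`, a mean likelihood ratio of at most one suffices.
  have h2 : ∏ i, (p (f i) / Q (f i)) ≤ 1 := by
    calc _ ≤ ∏ i, Real.exp (p (f i) / Q (f i) - 1) := by
          refine Finset.prod_le_prod (fun i _ => div_nonneg (hp.1 _) (hQ i).le) fun i _ => ?_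
          have := Real.add_one_le_exp (p (f i) / Q (f i) - 1)
          linarith
      _ = Real.exp (∑ i, (p (f i) / Q (f i) - 1)) := (Real.exp_sum _ _).symm
      _ ≤ 1 := by
          rw [Real.exp_le_one_iff, Finset.sum_sub_distrib]
          simp
          linarith
  rw [Finset.prod_div_distrib] at h2
  exact (div_le_one (Finset.prod_pos fun i _ => hQ i)).1 h2

/-- The letter counts of a word; they determine its type and take at most `(n + 1) ^ |Z|`
values. -/
def typeCount {Z : Type*} [Fintype Z] {n : ℕ} (f : Fin n → Z) (z : Z) : Fin (n + 1) :=
  ⟨(Finset.univ.filter fun i => f i = z).card, by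
    have := Finset.card_le_univ (Finset.univ.filter fun i => f i = z)
    simp only [Fintype.card_fin] at this
    omega⟩

lemma empDist_eq_of_typeCount {Z : Type*} [Fintype Z] {n : ℕ} {f g : Fin n → Z}
    (h : typeCount f = typeCount g) : empDist f = empDist g := by
  funext z
  exact congrArg (fun k : ℕ => (k : ℝ) / n) (congrArg Fin.val (congrFun h z))

/-- The words that are decoded correctly although the rate function at their type exceeds
`r_{0,n}` have total probability at most `1 / n`. By `rate_bound`, those of type `Q` number less than
`2 ^ (n H(Q)) (n + 1) ^ (-|𝒳||𝒴|) n⁻²`, and there are at most `(n + 1) ^ (|𝒳||𝒴|)` types. -/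
lemma good_mass {n M0 M1 M2 : ℕ} (hn : 0 < n) (p : 𝒳 × 𝒴 → ℝ) (hp : IsProb p)
    (C : GWCode 𝒳 𝒴 n M0 M1 M2) (r1 r2 : ℝ)
    (h1 : Real.logb 2 M1 / n ≤ r1) (h2 : Real.logb 2 M2 / n ≤ r2)
    (G : Finset (Fin n → 𝒳 × 𝒴)) (hC : ∀ f ∈ G, C.correct f)
    (hG : ∀ f ∈ G, Real.logb 2 M0 / n
            + (Fintype.card 𝒳 * Fintype.card 𝒴 : ℝ) * Real.logb 2 (n + 1) / n
            + (Real.logb 2 n / n + Real.logb 2 n / n) < Rgw (empDist f) r1 r2) :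
    ∑ f ∈ G, prodDist p n f ≤ 1 / n := by
  have hn' : (0 : ℝ) < n := by exact_mod_cast hn
  set N : ℝ := Fintype.card 𝒳 * Fintype.card 𝒴 with hN
  have hcls : ∀ t, ∑ f ∈ G.filter (fun f => typeCount f = t), prodDist p n f
      ≤ (2 : ℝ) ^ (-(N * Real.logb 2 (n + 1) + 2 * Real.logb 2 n)) := by
    intro t
    set D := G.filter (fun f => typeCount f = t) with hD
    rcases D.eq_empty_or_nonempty with h | ⟨f0, hf0⟩
    · rw [h]; simp only [Finset.sum_empty]; positivity
    have hDG : ∀ f ∈ D, f ∈ G ∧ typeCount f = t := fun f hf => Finset.mem_filter.1 hf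
    have hem : ∀ f ∈ D, empDist f = empDist f0 := fun f hf =>
      empDist_eq_of_typeCount ((hDG f hf).2.trans (hDG f0 hf0).2.symm)
    have hDc : (0 : ℝ) < D.card := by exact_mod_cast Finset.card_pos.2 ⟨f0, hf0⟩
    have hb := rate_bound hn C D ⟨f0, hf0⟩ (fun f hf => hC f (hDG f hf).1) (empDist f0)
      (empDist_prob hn f0) hem r1 r2 h1 h2
    have hb2 := (hG f0 (hDG f0 hf0).1).trans_le hb
    have hb3 : Real.logb 2 D.card - n * ent (empDist f0)
        ≤ -(N * Real.logb 2 (n + 1) + 2 * Real.logb 2 n) := by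
      have := mul_lt_mul_of_pos_left hb2 hn'
      have e1 : n * (Real.logb 2 M0 / n + N * Real.logb 2 (n + 1) / n
          + (Real.logb 2 n / n + Real.logb 2 n / n))
          = Real.logb 2 M0 + N * Real.logb 2 (n + 1) + 2 * Real.logb 2 n := by
        field_simp; ring
      have e2 : n * (ent (empDist f0) - Real.logb 2 D.card / n + Real.logb 2 M0 / n)
          = n * ent (empDist f0) - Real.logb 2 D.card + Real.logb 2 M0 := by
        field_simp
      rw [e1, e2] at this
      linarith
    calc ∑ f ∈ D, prodDist p n f ≤ ∑ f ∈ D, (2 : ℝ) ^ (-(n * ent (empDist f0))) := by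
          refine Finset.sum_le_sum fun f hf => ?_
          rw [← hem f hf]
          exact prod_le hn p hp f
      _ = (2 : ℝ) ^ (Real.logb 2 D.card - n * ent (empDist f0)) := by
          rw [Finset.sum_const, nsmul_eq_mul, sub_eq_add_neg, Real.rpow_add (by norm_num),
            Real.rpow_logb (by norm_num) (by norm_num) hDc]
      _ ≤ _ := Real.rpow_le_rpow_of_exponent_le (by norm_num) hb3
  have hcard : (Fintype.card (𝒳 × 𝒴 → Fin (n + 1)) : ℝ) = (2 : ℝ) ^ (N * Real.logb 2 (n + 1)) := by
    rw [mul_comm, Real.rpow_mul (by norm_num),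
      Real.rpow_logb (by norm_num) (by norm_num) (by positivity), hN]
    have : (Fintype.card 𝒳 * Fintype.card 𝒴 : ℝ) = ((Fintype.card 𝒳 * Fintype.card 𝒴 : ℕ) : ℝ) := by
      push_cast; rfl
    rw [this, Real.rpow_natCast]
    simp
  have hn1 : (1 : ℝ) ≤ n := by exact_mod_cast hn
  calc ∑ f ∈ G, prodDist p n f
      = ∑ t, ∑ f ∈ G.filter (fun f => typeCount f = t), prodDist p n f := by
        rw [← Finset.sum_fiberwise G typeCount]
    _ ≤ ∑ t : 𝒳 × 𝒴 → Fin (n + 1),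
          (2 : ℝ) ^ (-(N * Real.logb 2 (n + 1) + 2 * Real.logb 2 n)) :=
        Finset.sum_le_sum fun t _ => hcls t
    _ = (2 : ℝ) ^ (-(2 * Real.logb 2 n)) := by
        rw [Finset.sum_const, nsmul_eq_mul, Finset.card_univ, hcard,
          ← Real.rpow_add (by norm_num)]
        congr 1
        ring
    _ ≤ (2 : ℝ) ^ (-Real.logb 2 n) := by
        apply Real.rpow_le_rpow_of_exponent_le (by norm_num)
        have := Real.logb_nonneg (b := 2) (by norm_num) hn1
        linarith
    _ = 1 / n := by
        rw [Real.rpow_neg (by norm_num), Real.rpow_logb (by norm_num) (by norm_num) hn', one_div]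

end

end GWConv

/-- Lemma 7, converse bound: with
`α_n = β_n = (log n)/n`, any Gray–Wyner code satisfies
`P_e(Φ_n|P_XYⁿ) ≥ Pr( r_{0,n} < R(r_{1,n}, r_{2,n}|t_{XⁿYⁿ}) ) − 1/n`, where
`r_{0,n} = (1/n)log|ℳ0| + |𝒳||𝒴|log(n+1)/n + (α_n+β_n)` and
`r_{i,n} = (1/n)log|ℳi| + 1/n + 2^{-nβ_n} log|𝒳_i|` for `i = 1,2`. -/
theorem converse_bound
    {𝒳 𝒴 : Type*} [Fintype 𝒳] [Fintype 𝒴]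
    (p : 𝒳 × 𝒴 → ℝ) (hp : IsProb p)
    {n M0 M1 M2 : ℕ} (hn : 0 < n)
    (C : GWCode 𝒳 𝒴 n M0 M1 M2) :
    (∑ f ∈ Finset.univ.filter (fun f : Fin n → 𝒳 × 𝒴 =>
        Real.logb 2 M0 / n
            + (Fintype.card 𝒳 * Fintype.card 𝒴 : ℝ) * Real.logb 2 (n + 1) / n
            + (Real.logb 2 n / n + Real.logb 2 n / n)
          < Rgw (empDist f)
              (Real.logb 2 M1 / n + 1 / n
                + (2 : ℝ) ^ (-(n : ℝ) * (Real.logb 2 n / n))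
                  * Real.logb 2 (Fintype.card 𝒳))
              (Real.logb 2 M2 / n + 1 / n
                + (2 : ℝ) ^ (-(n : ℝ) * (Real.logb 2 n / n))
                  * Real.logb 2 (Fintype.card 𝒴))),
        prodDist p n f) - 1 / n
      ≤ PeGW C (prodDist p n) := by
  have hz : Nonempty (𝒳 × 𝒴) := by
    by_contra hno
    rw [not_nonempty_iff] at hno
    simpa using hp.2
  obtain ⟨x0, y0⟩ := hz
  have hX : (1 : ℝ) ≤ Fintype.card 𝒳 := by exact_mod_cast Fintype.card_pos_iff.2 ⟨x0⟩
  have hY : (1 : ℝ) ≤ Fintype.card 𝒴 := by exact_mod_cast Fintype.card_pos_iff.2 ⟨y0⟩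
  have hlX := Real.logb_nonneg (b := 2) (by norm_num) hX
  have hlY := Real.logb_nonneg (b := 2) (by norm_num) hY
  set r1 := Real.logb 2 M1 / n + 1 / n
                + (2 : ℝ) ^ (-(n : ℝ) * (Real.logb 2 n / n))
                  * Real.logb 2 (Fintype.card 𝒳) with hr1
  set r2 := Real.logb 2 M2 / n + 1 / n
                + (2 : ℝ) ^ (-(n : ℝ) * (Real.logb 2 n / n))
                  * Real.logb 2 (Fintype.card 𝒴) with hr2
  have h1 : Real.logb 2 M1 / n ≤ r1 := by
    rw [hr1, add_assoc]
    exact le_add_of_nonneg_right (by positivity)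
  have h2 : Real.logb 2 M2 / n ≤ r2 := by
    rw [hr2, add_assoc]
    exact le_add_of_nonneg_right (by positivity)
  set B := Finset.univ.filter (fun f : Fin n → 𝒳 × 𝒴 =>
        Real.logb 2 M0 / n
            + (Fintype.card 𝒳 * Fintype.card 𝒴 : ℝ) * Real.logb 2 (n + 1) / n
            + (Real.logb 2 n / n + Real.logb 2 n / n) < Rgw (empDist f) r1 r2) with hB
  have hgood := GWConv.good_mass hn p hp C r1 r2 h1 h2 (B.filter fun f => C.correct f)
    (fun f hf => (Finset.mem_filter.1 hf).2)
    (fun f hf => (Finset.mem_filter.1 (Finset.mem_filter.1 hf).1).2)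
  have hbad : ∑ f ∈ B.filter (fun f => ¬ C.correct f), prodDist p n f
      ≤ PeGW C (prodDist p n) := by
    unfold PeGW
    refine Finset.sum_le_sum_of_subset_of_nonneg ?_
      fun f _ _ => Finset.prod_nonneg fun i _ => hp.1 _
    exact Finset.filter_subset_filter _ (Finset.subset_univ _)
  rw [← Finset.sum_filter_add_sum_filter_not B (fun f => C.correct f)]
  linarith
end
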